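/- Uniqueness of the rarefaction wave (Theorem 2.1): Let p satisfy the pressure assumptions and let (ρ̃,ũ) be the rarefaction-wave solution of the Riemann problem, extended as constant in the x₂ variable. Then every bounded admissible weak solution (ρ,u) of the Riemann problem on (0,T)×Ω with ρ ≥ 0 a.e. coincides with it: ρ = ρ̃ and u = ũ almost everywhere in (0,T)×Ω. -/

import Mathlib

/-!
The proof compares the weak solution with the rarefaction wave by means of the relative energy
`E(r,w | R,U) = ½ r |w - (U,0)|² + H(r) - H'(R)(r - R) - H(R)`,
which is nonnegative and vanishes only for `r = R`, `w = (U,0)`, because `R > 0` and `p` is strictly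
increasing (`eq_of_relE2_eq_zero`).

The rarefaction wave is singular at `t = 0`, so the reference state is the shifted fan
`(R,U)(x₁/(t+ε))`, which is Lipschitz on `[0,τ] × Ω` and still solves the Euler system. The energy
inequality, the momentum equation tested with `(U,0)` and the equation of continuity tested with
`½U² - H'(R)` combine to a balance of relative energy on `(0,τ) × Ω` (`relE_step`). Test functions
have to be `C¹`, and Lipschitz functions of `x₁/(t+ε)` are reached by Steklov averaging
(`exists_smooth_approx`, `selfsim_extend`). Two signs make the balance useful.

* The source term is `-∂₁U · (ρ(u¹-U)² + p(ρ) - p(R) - p'(R)(ρ-R))`, which is nonpositive since `U` is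
  nondecreasing and `p` is convex (`source_nonpos`).
* The shifted fan need not agree with the Riemann data at `x₁ = ±a`, where the balance leaves the
  fluxes `q` of the relative energy of the constant end states with respect to the fan. They point
  outwards (`relQ_nonneg`, `relQ_nonpos`): for the constant state the same computation as for the
  source shows that `q - ξE` is nonincreasing in `ξ`, and it vanishes where the fan has reached the end
  state.

Hence the relative energy at time `τ` is at most its initial value, the relative energy of the Riemann
data with respect to `(R,U)(x₁/ε)`. The profiles are constant for large `|ξ|`
(`Profile.eventually_const`, `wave_ends`), so this initial value tends to `0` with `ε`
(`tendsto_relE_init`). In the limit the relative energy with respect to the rarefaction wave vanishes at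
a.e. time `τ`.
-/

open MeasureTheory Set

noncomputable section

/-- The pressure potential `H(ρ) = ρ ∫_1^ρ p(z)/z² dz`. -/
def Hfun (p : ℝ → ℝ) (ρ : ℝ) : ℝ := ρ * ∫ z in (1:ℝ)..ρ, p z / z ^ 2

/-- Partial derivative of a scalar field on `ℝ²` with respect to the first variable. -/
def pd1 (f : ℝ × ℝ → ℝ) (x : ℝ × ℝ) : ℝ := deriv (fun y => f (y, x.2)) x.1

/-- Partial derivative of a scalar field on `ℝ²` with respect to the second variable. -/
def pd2 (f : ℝ × ℝ → ℝ) (x : ℝ × ℝ) : ℝ := deriv (fun y => f (x.1, y)) x.2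

/-- Time derivative of a time-dependent scalar field. -/
def pdt (f : ℝ → ℝ × ℝ → ℝ) (t : ℝ) (x : ℝ × ℝ) : ℝ := deriv (fun s => f s x) t

/-- Euclidean dot product on `ℝ²`. -/
def dot (v w : ℝ × ℝ) : ℝ := v.1 * w.1 + v.2 * w.2

/-- The spatial domain `Ω = (−a,a) × 𝕋¹`, the torus being realized as the periodic
cell `(0,1)` in the `x₂` variable. -/
def Dom (a : ℝ) : Set (ℝ × ℝ) := Ioo (-a) a ×ˢ Ioo (0:ℝ) 1

/-- Riemann-type initial data: the value `L` for `x₁ ≤ 0` and `R` for `x₁ > 0`. -/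
def riem (L R : ℝ) (x : ℝ × ℝ) : ℝ := if x.1 ≤ 0 then L else R

/-- Hypotheses on the pressure: `p ∈ C[0,∞) ∩ C¹(0,∞)`, `p(0) = 0`, `p' > 0` on `(0,∞)`,
`p` convex on `[0,∞)`. -/
def PressureOK (p : ℝ → ℝ) : Prop :=
  ContinuousOn p (Ici 0) ∧ ContDiffOn ℝ 1 p (Ioi 0) ∧ p 0 = 0 ∧
    (∀ ρ : ℝ, 0 < ρ → 0 < deriv p ρ) ∧ ConvexOn ℝ (Ici 0) p

/-- A scalar test function: `C¹` on `[0,T] × Ω̄` (realized as a globally `C¹` function) and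
`1`-periodic in the `x₂` variable. -/
def IsTest (φ : ℝ → ℝ × ℝ → ℝ) : Prop :=
  ContDiff ℝ 1 (Function.uncurry φ) ∧ ∀ t x₁ x₂, φ t (x₁, x₂ + 1) = φ t (x₁, x₂)

/-- A vector test function: `C¹` on `[0,T] × Ω̄` (realized as a globally `C¹` function) and
`1`-periodic in the `x₂` variable. -/
def IsTestV (φ : ℝ → ℝ × ℝ → ℝ × ℝ) : Prop :=
  ContDiff ℝ 1 (Function.uncurry φ) ∧ ∀ t x₁ x₂, φ t (x₁, x₂ + 1) = φ t (x₁, x₂)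

/-- A bounded admissible weak solution of the Riemann problem for the compressible Euler
system on `(0,T) × Ω`, with Riemann data `(ρ_L, u¹_L)`, `(ρ_R, u¹_R)`: the weak formulation
(w1) of the equation of continuity, (w2) of the momentum equation and the energy
inequality (w3), with the prescribed initial state and boundary fluxes. -/
structure IsAdmissibleWeakSol (T a : ℝ) (p : ℝ → ℝ) (ρL ρR u1L u1R : ℝ)
    (ρ : ℝ → ℝ × ℝ → ℝ) (u : ℝ → ℝ × ℝ → ℝ × ℝ) : Prop where
  meas_ρ : Measurable (Function.uncurry ρ)
  meas_u : Measurable (Function.uncurry u)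
  bdd : ∃ C : ℝ, ∀ t x, |ρ t x| ≤ C ∧ ‖u t x‖ ≤ C
  nonneg : ∀ᵐ z ∂(volume.restrict (Ioo 0 T ×ˢ Dom a) : Measure (ℝ × (ℝ × ℝ))),
    0 ≤ ρ z.1 z.2
  w1 : ∀ᵐ τ ∂(volume.restrict (Ioo 0 T)), ∀ φ : ℝ → ℝ × ℝ → ℝ, IsTest φ →
    (∫ x in Dom a, (ρ τ x * φ τ x - riem ρL ρR x * φ 0 x)) +
      (∫ t in (0:ℝ)..τ, ∫ s in (0:ℝ)..1,
        (ρR * u1R * φ t (a, s) - ρL * u1L * φ t (-a, s)))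
    = ∫ t in (0:ℝ)..τ, ∫ x in Dom a,
        (ρ t x * pdt φ t x
          + ρ t x * ((u t x).1 * pd1 (φ t) x + (u t x).2 * pd2 (φ t) x))
  w2 : ∀ᵐ τ ∂(volume.restrict (Ioo 0 T)), ∀ φ : ℝ → ℝ × ℝ → ℝ × ℝ, IsTestV φ →
    (∫ x in Dom a, (ρ τ x * dot (u τ x) (φ τ x)
        - riem ρL ρR x * dot (riem u1L u1R x, 0) (φ 0 x))) +
      (∫ t in (0:ℝ)..τ, ∫ s in (0:ℝ)..1,
        (ρR * u1R * dot (u1R, 0) (φ t (a, s)) - ρL * u1L * dot (u1L, 0) (φ t (-a, s)))) +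
      (∫ t in (0:ℝ)..τ, ∫ s in (0:ℝ)..1,
        (p ρR * (φ t (a, s)).1 - p ρL * (φ t (-a, s)).1))
    = ∫ t in (0:ℝ)..τ, ∫ x in Dom a,
        (ρ t x * dot (u t x) (deriv (fun τ' => φ τ' x) t)
          + ρ t x * ((u t x).1 * (u t x).1 * pd1 (fun y => (φ t y).1) x
            + (u t x).2 * (u t x).1 * pd2 (fun y => (φ t y).1) x
            + (u t x).1 * (u t x).2 * pd1 (fun y => (φ t y).2) x
            + (u t x).2 * (u t x).2 * pd2 (fun y => (φ t y).2) x)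
          + p (ρ t x) * (pd1 (fun y => (φ t y).1) x + pd2 (fun y => (φ t y).2) x))
  w3 : ∀ᵐ τ ∂(volume.restrict (Ioo 0 T)),
    (∫ x in Dom a, (1 / 2 * ρ τ x * dot (u τ x) (u τ x) + Hfun p (ρ τ x))) -
      (∫ x in Dom a, (1 / 2 * riem ρL ρR x * (riem u1L u1R x) ^ 2
        + Hfun p (riem ρL ρR x))) +
      (∫ _t in (0:ℝ)..τ, ∫ _s in (0:ℝ)..1,
        ((1 / 2 * ρR * u1R ^ 2 + Hfun p ρR + p ρR) * u1R
          - (1 / 2 * ρL * u1L ^ 2 + Hfun p ρL + p ρL) * u1L)) ≤ 0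

/-- The rarefaction-wave solution of the Riemann problem: `ρ̃(t,x) = R(x₁/t)`,
`ũ(t,x) = (U(x₁/t),0)` with `R, U` Lipschitz, `U` nondecreasing, `R` bounded below by a
positive constant, solving the compressible Euler system a.e. in `(0,T) × ℝ²` and attaining
the Riemann data in `L¹_loc` as `t → 0+`. -/
structure IsRarefactionWave (T : ℝ) (p : ℝ → ℝ) (ρL ρR u1L u1R : ℝ)
    (R U : ℝ → ℝ) : Prop where
  lipR : ∃ K, LipschitzWith K R
  lipU : ∃ K, LipschitzWith K U
  monoU : Monotone U
  lower : ∃ c : ℝ, 0 < c ∧ ∀ ξ, c ≤ R ξ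
  euler : ∀ᵐ z ∂(volume.restrict (Ioo 0 T ×ˢ (univ : Set (ℝ × ℝ))) :
      Measure (ℝ × (ℝ × ℝ))),
    ((DifferentiableAt ℝ (fun s => R (z.2.1 / s)) z.1 ∧
        DifferentiableAt ℝ (fun s => U (z.2.1 / s)) z.1) ∧
      (DifferentiableAt ℝ (fun y => R (y / z.1)) z.2.1 ∧
        DifferentiableAt ℝ (fun y => U (y / z.1)) z.2.1 ∧
        DifferentiableAt ℝ (fun y => p (R (y / z.1))) z.2.1)) ∧
    (deriv (fun s => R (z.2.1 / s)) z.1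
        + deriv (fun y => R (y / z.1) * U (y / z.1)) z.2.1 = 0 ∧
      deriv (fun s => R (z.2.1 / s) * U (z.2.1 / s)) z.1
        + deriv (fun y => R (y / z.1) * U (y / z.1) ^ 2 + p (R (y / z.1))) z.2.1 = 0)
  init : ∀ b : ℝ, 0 < b → Filter.Tendsto
    (fun t => ∫ x in (Ioo (-b) b ×ˢ Ioo (-b) b : Set (ℝ × ℝ)),
      (|R (x.1 / t) - riem ρL ρR x| + |U (x.1 / t) - riem u1L u1R x|))
    (nhdsWithin 0 (Ioi 0)) (nhds 0)

end

open Filter Topology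
open scoped NNReal

/-! ### Lipschitz functions and self-similar integrands -/

lemma ac_of_lip {F : ℝ → ℝ} {K : ℝ≥0} (hF : LipschitzWith K F) (a b : ℝ) :
    AbsolutelyContinuousOnInterval F a b :=
  (hF.lipschitzOnWith (s := uIcc a b)).absolutelyContinuousOnInterval

lemma lip_ftc {F : ℝ → ℝ} {K : ℝ≥0} (hF : LipschitzWith K F) (a b : ℝ) :
    ∫ x in a..b, deriv F x = F b - F a :=
  (ac_of_lip hF a b).integral_deriv_eq_sub

lemma ac_antitone {F : ℝ → ℝ} {a b : ℝ} (hab : a ≤ b)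
    (hF : AbsolutelyContinuousOnInterval F a b)
    (hd : ∀ᵐ x, a < x → x < b → deriv F x ≤ 0) : F b ≤ F a := by
  have h := hF.integral_deriv_eq_sub
  have : ∫ x in a..b, deriv F x ≤ 0 := by
    rw [intervalIntegral.integral_of_le hab, integral_Ioc_eq_integral_Ioo]
    apply integral_nonpos_of_ae
    rw [EventuallyLE, ae_restrict_iff' measurableSet_Ioo]
    filter_upwards [hd] with x hx hm using hx hm.1 hm.2
  linarith

/-- Steklov averages `(n+1) ∫_x^{x+1/(n+1)} F` approximate a Lipschitz function by `C¹` functions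
whose derivatives, being difference quotients of `F`, are bounded by the Lipschitz constant and
converge wherever `F` is differentiable. -/
lemma exists_smooth_approx {F : ℝ → ℝ} {K : ℝ≥0} (hF : LipschitzWith K F) :
    ∃ G : ℕ → ℝ → ℝ, (∀ n, ContDiff ℝ 1 (G n)) ∧ (∀ x, Tendsto (fun n => G n x) atTop (𝓝 (F x))) ∧
      (∀ n x, |G n x - F x| ≤ K) ∧ (∀ n x, |deriv (G n) x| ≤ K) ∧
      ∀ x, DifferentiableAt ℝ F x →
        Tendsto (fun n => deriv (G n) x) atTop (𝓝 (deriv F x)) := by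
  have hc : Continuous F := hF.continuous
  let Φ : ℝ → ℝ := fun x => ∫ s in (0:ℝ)..x, F s
  have hΦ : ∀ x, HasDerivAt Φ (F x) x := fun x =>
    intervalIntegral.integral_hasDerivAt_right (hc.intervalIntegrable _ _)
      (hc.stronglyMeasurableAtFilter _ _) hc.continuousAt
  let d : ℕ → ℝ := fun n => 1 / ((n:ℝ) + 1)
  have hd : ∀ n, 0 < d n := fun n => Nat.one_div_pos_of_nat
  have hd1 : ∀ n, d n ≤ 1 := fun n => by
    simp only [d]; rw [div_le_one (by positivity)]; linarith [n.cast_nonneg (α := ℝ)]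
  have hd0 : Tendsto d atTop (𝓝 0) := tendsto_one_div_add_atTop_nhds_zero_nat
  let G : ℕ → ℝ → ℝ := fun n x => (d n)⁻¹ * (Φ (x + d n) - Φ x)
  have hG : ∀ n x, HasDerivAt (G n) ((d n)⁻¹ * (F (x + d n) - F x)) x := fun n x => by
    have h1 : HasDerivAt (fun y => Φ (y + d n)) (F (x + d n)) x :=
      HasDerivAt.comp_add_const x (d n) (hΦ _)
    exact (h1.sub (hΦ x)).const_mul _
  have hbd : ∀ n x, |G n x - F x| ≤ K * d n := fun n x => by
    have e : Φ (x + d n) - Φ x = ∫ s in x..(x + d n), F s :=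
      intervalIntegral.integral_interval_sub_left (hc.intervalIntegrable _ _)
        (hc.intervalIntegrable _ _)
    have e2 : G n x - F x = (d n)⁻¹ * ∫ s in x..(x + d n), (F s - F x) := by
      rw [intervalIntegral.integral_sub (hc.intervalIntegrable _ _) (by simp)]
      simp only [G, e, intervalIntegral.integral_const, smul_eq_mul]
      have := (hd n).ne'
      field_simp
      ring
    have e3 : |∫ s in x..(x + d n), (F s - F x)| ≤ (K * d n) * |x + d n - x| := by
      rw [← Real.norm_eq_abs]
      refine intervalIntegral.norm_integral_le_of_norm_le_const fun s hs => ?_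
      rw [uIoc_of_le (by linarith [hd n])] at hs
      have h1 := hF.dist_le_mul s x
      rw [Real.dist_eq, Real.dist_eq] at h1
      rw [Real.norm_eq_abs]
      refine h1.trans (mul_le_mul_of_nonneg_left ?_ K.2)
      rw [abs_of_pos (by linarith [hs.1])]; linarith [hs.2]
    rw [e2, abs_mul, abs_of_pos (inv_pos.2 (hd n))]
    rw [add_sub_cancel_left, abs_of_pos (hd n)] at e3
    rw [inv_mul_le_iff₀ (hd n)]; linarith
  refine ⟨G, fun n => ?_, fun x => ?_, fun n x => ?_, fun n x => ?_, fun x hx => ?_⟩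
  · rw [contDiff_one_iff_deriv]
    refine ⟨fun x => (hG n x).differentiableAt, ?_⟩
    have : deriv (G n) = fun x => (d n)⁻¹ * (F (x + d n) - F x) := funext fun x => (hG n x).deriv
    rw [this]; fun_prop
  · rw [tendsto_iff_dist_tendsto_zero]
    refine squeeze_zero (fun _ => dist_nonneg) (fun n => ?_)
      (by simpa using hd0.const_mul (K:ℝ))
    rw [Real.dist_eq]; exact hbd n x
  · exact (hbd n x).trans (mul_le_of_le_one_right K.2 (hd1 n))
  · rw [(hG n x).deriv, abs_mul, abs_of_pos (inv_pos.2 (hd n)), inv_mul_le_iff₀ (hd n)]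
    have h1 := hF.dist_le_mul (x + d n) x
    rw [Real.dist_eq, Real.dist_eq, add_sub_cancel_left, abs_of_pos (hd n)] at h1
    linarith
  · simp only [(hG _ x).deriv]
    have h := hx.hasDerivAt.tendsto_slope_zero
    have hd0' : Tendsto d atTop (𝓝[≠] 0) :=
      tendsto_nhdsWithin_iff.2 ⟨hd0, Eventually.of_forall fun n => (hd n).ne'⟩
    exact h.comp hd0'

lemma ae_div_of_ae {P : ℝ → Prop} (h : ∀ᵐ ξ, P ξ) {s : ℝ} (hs : s ≠ 0) : ∀ᵐ y : ℝ, P (y / s) := by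
  rw [ae_iff] at h ⊢
  have : {y : ℝ | ¬ P (y / s)} = (fun y => y * s⁻¹) ⁻¹' {ξ | ¬ P ξ} := by
    ext y; simp [div_eq_mul_inv]
  rw [this, Real.volume_preimage_mul_right (inv_ne_zero hs), h, mul_zero]

lemma ae_of_ae_div {P : ℝ → Prop} {s : ℝ} (hs : s ≠ 0) (h : ∀ᵐ y : ℝ, P (y / s)) : ∀ᵐ ξ, P ξ := by
  have := ae_div_of_ae (P := fun y => P (y / s)) h (inv_ne_zero hs)
  filter_upwards [this] with ξ hξ
  simpa [hs] using hξ

lemma ae_fst_of_ae {P : ℝ → Prop} (h : ∀ᵐ ξ, P ξ) (a : ℝ) {s : ℝ} (hs : s ≠ 0) :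
    ∀ᵐ x ∂(volume.restrict (Dom a)), P (x.1 / s) := by
  apply ae_restrict_of_ae
  exact (Measure.quasiMeasurePreserving_fst (μ := (volume : Measure ℝ)) (ν := (volume : Measure ℝ))).ae
    (ae_div_of_ae h hs)

lemma measurableSet_Dom (a : ℝ) : MeasurableSet (Dom a) := measurableSet_Ioo.prod measurableSet_Ioo

instance finite_Dom (a : ℝ) : IsFiniteMeasure (volume.restrict (Dom a)) := by
  constructor
  rw [Measure.restrict_apply_univ, Dom, Measure.volume_eq_prod, Measure.prod_prod]
  simp

lemma integrable_of_bdd {α : Type*} [MeasurableSpace α] {μ : Measure α} [IsFiniteMeasure μ]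
    {f : α → ℝ} (hf : AEStronglyMeasurable f μ) {C : ℝ} (h : ∀ᵐ x ∂μ, |f x| ≤ C) :
    Integrable f μ :=
  Integrable.of_bound hf C h

/-- Fields that depend on `x₁` alone: the torus has unit length. -/
lemma integral_Dom_fst {a : ℝ} (ha : 0 ≤ a) (f : ℝ → ℝ) :
    ∫ x in Dom a, f x.1 = ∫ y in (-a)..a, f y := by
  rw [intervalIntegral.integral_of_le (by linarith), integral_Ioc_eq_integral_Ioo, Dom,
    Measure.volume_eq_prod, ← Measure.prod_restrict]
  rw [integral_fun_fst]
  simp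

/-- Dominated convergence in a slice `t = const` and then in time, for integrands that involve a
function of the similarity variable `x₁/(t+ε)`. -/
lemma tendsto_selfsim {a τ ε : ℝ} (hτ : 0 ≤ τ) (hε : 0 < ε) {k : ℝ → ℝ × ℝ → ℝ}
    (hk : Measurable (Function.uncurry k)) {Ck : ℝ}
    (hkb : ∀ t ∈ Ioc 0 τ, ∀ x ∈ Dom a, |k t x| ≤ Ck) {f : ℕ → ℝ → ℝ} {g : ℝ → ℝ}
    (hf : ∀ n, Measurable (f n)) {K : ℝ} (hfb : ∀ n x, |f n x| ≤ K)
    (hfg : ∀ᵐ ξ, Tendsto (fun n => f n ξ) atTop (𝓝 (g ξ))) :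
    Tendsto (fun n => ∫ t in (0:ℝ)..τ, ∫ x in Dom a, k t x * f n (x.1 / (t + ε))) atTop
      (𝓝 (∫ t in (0:ℝ)..τ, ∫ x in Dom a, k t x * g (x.1 / (t + ε)))) := by
  have hK : 0 ≤ K := (abs_nonneg _).trans (hfb 0 0)
  simp only [intervalIntegral.integral_of_le hτ]
  have bd : ∀ n, ∀ t ∈ Ioc 0 τ, ∀ᵐ x ∂(volume.restrict (Dom a)),
      ‖k t x * f n (x.1 / (t + ε))‖ ≤ Ck * K := fun n t ht => by
    filter_upwards [ae_restrict_mem (measurableSet_Dom a)] with x hx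
    rw [Real.norm_eq_abs, abs_mul]
    exact mul_le_mul (hkb t ht x hx) (hfb _ _) (abs_nonneg _) ((abs_nonneg _).trans (hkb t ht x hx))
  have hm : ∀ n, Measurable (fun z : ℝ × (ℝ × ℝ) => k z.1 z.2 * f n (z.2.1 / (z.1 + ε))) := fun n =>
    Measurable.mul hk ((hf n).comp (by fun_prop))
  refine tendsto_integral_of_dominated_convergence
    (fun _ => Ck * K * (volume.restrict (Dom a)).real univ) (fun n => ?_) (integrable_const _)
    (fun n => ?_) ?_
  · exact ((hm n).stronglyMeasurable.integral_prod_right').aestronglyMeasurable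
  · filter_upwards [ae_restrict_mem measurableSet_Ioc] with t ht
    exact norm_integral_le_of_norm_le_const (bd n t ht)
  · filter_upwards [ae_restrict_mem measurableSet_Ioc] with t ht
    refine tendsto_integral_of_dominated_convergence (fun _ => Ck * K) (fun n => ?_)
      (integrable_const _) (fun n => bd n t ht) ?_
    · exact ((hm n).comp (measurable_prodMk_left (x := t))).aestronglyMeasurable
    · filter_upwards [ae_fst_of_ae hfg a (s := t + ε) (by linarith [ht.1])] with x hx
      exact hx.const_mul _

/-! ### The pressure potential -/

/-- The derivative `H'(r) = ∫_1^r p(z)/z² dz + p(r)/r` of the pressure potential on `(0,∞)`. -/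
noncomputable def Hder (p : ℝ → ℝ) (r : ℝ) : ℝ := (∫ z in (1:ℝ)..r, p z / z ^ 2) + p r / r

section Pressure
variable {p : ℝ → ℝ}

lemma PressureOK.hasDerivAt (hp : PressureOK p) {r : ℝ} (hr : 0 < r) :
    HasDerivAt p (deriv p r) r :=
  ((hp.2.1.differentiableOn one_ne_zero).differentiableAt (Ioi_mem_nhds hr)).hasDerivAt

lemma PressureOK.strictMono (hp : PressureOK p) : StrictMonoOn p (Ici 0) :=
  strictMonoOn_of_deriv_pos (convex_Ici 0) hp.1 fun x hx => by
    rw [interior_Ici] at hx; exact hp.2.2.2.1 x hx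

lemma PressureOK.nonneg (hp : PressureOK p) {r : ℝ} (hr : 0 ≤ r) : 0 ≤ p r := by
  have := hp.strictMono.monotoneOn (mem_Ici.2 le_rfl) hr hr
  rwa [hp.2.2.1] at this

lemma PressureOK.tangent (hp : PressureOK p) {r s : ℝ} (hr : 0 ≤ r) (hs : 0 < s) :
    p s + deriv p s * (r - s) ≤ p r := by
  have hc := hp.2.2.2.2
  have hd := hp.hasDerivAt hs
  rcases lt_trichotomy r s with h | h | h
  · have := hc.slope_le_of_hasDerivAt hr (mem_Ici.2 hs.le) h hd
    rw [slope_def_field, div_le_iff₀ (by linarith)] at this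
    linarith
  · subst h; simp
  · have := hc.le_slope_of_hasDerivAt (mem_Ici.2 hs.le) hr h hd
    rw [slope_def_field, le_div_iff₀ (by linarith)] at this
    linarith

lemma PressureOK.cont_deriv (hp : PressureOK p) : ContinuousOn (deriv p) (Ioi 0) :=
  hp.2.1.continuousOn_deriv_of_isOpen isOpen_Ioi le_rfl

lemma PressureOK.contOn_Ioi (hp : PressureOK p) : ContinuousOn (fun z => p z / z ^ 2) (Ioi 0) :=
  (hp.1.mono Ioi_subset_Ici_self).div (by fun_prop) fun x hx => by
    have : (0:ℝ) < x := hx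
    positivity

lemma PressureOK.intervalIntegrable (hp : PressureOK p) {r s : ℝ} (hr : 0 < r) (hs : 0 < s) :
    IntervalIntegrable (fun z => p z / z ^ 2) volume r s :=
  (hp.contOn_Ioi.mono fun x hx => by
    have := (mem_uIcc.1 hx); rw [mem_Ioi]
    rcases this with h | h <;> linarith [h.1]).intervalIntegrable

lemma PressureOK.hasDerivAt_int (hp : PressureOK p) {r : ℝ} (hr : 0 < r) :
    HasDerivAt (fun r => ∫ z in (1:ℝ)..r, p z / z ^ 2) (p r / r ^ 2) r :=
  intervalIntegral.integral_hasDerivAt_right (hp.intervalIntegrable one_pos hr)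
    (hp.contOn_Ioi.stronglyMeasurableAtFilter isOpen_Ioi r hr)
    (hp.contOn_Ioi.continuousAt (Ioi_mem_nhds hr))

lemma PressureOK.hasDerivAt_Hder (hp : PressureOK p) {r : ℝ} (hr : 0 < r) :
    HasDerivAt (Hder p) (deriv p r / r) r := by
  have := (hp.hasDerivAt_int hr).add ((hp.hasDerivAt hr).div (hasDerivAt_id r) hr.ne')
  refine this.congr_deriv ?_
  have := hr.ne'
  simp only [id]
  field_simp
  ring

lemma PressureOK.continuousOn_Hfun (hp : PressureOK p) : ContinuousOn (Hfun p) (Ioi 0) :=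
  continuousOn_id.mul fun _ hx => (hp.hasDerivAt_int hx).continuousAt.continuousWithinAt

lemma Hfun_zero : Hfun p 0 = 0 := by simp [Hfun]

lemma Hder_mul (p : ℝ → ℝ) {r : ℝ} (hr : 0 < r) : Hder p r * r - Hfun p r = p r := by
  have := hr.ne'
  rw [Hder, Hfun]; field_simp; ring

/-- The relative internal energy `H(r) - H'(s)(r-s) - H(s)`, written as `H(r) - H'(s) r + p(s)`,
equals `r ∫_s^r (p(z)-p(s))/z² dz`. -/
lemma PressureOK.rel_eq (hp : PressureOK p) {r s : ℝ} (hr : 0 < r) (hs : 0 < s) :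
    Hfun p r - Hder p s * r + p s = r * ∫ z in s..r, (p z - p s) / z ^ 2 := by
  have h0 : ∀ z ∈ uIcc s r, 0 < z := fun z hz => by
    rcases mem_uIcc.1 hz with h | h <;> linarith [h.1]
  have h1 : ∫ z in s..r, p s / z ^ 2 = p s / s - p s / r := by
    have h2 : ∀ z ∈ uIcc s r, HasDerivAt (fun z => -(p s) / z) (p s / z ^ 2) z := fun z hz => by
      have := ((hasDerivAt_const z (-(p s))).div (hasDerivAt_id z) (h0 z hz).ne')
      refine this.congr_deriv ?_
      simp
    rw [intervalIntegral.integral_eq_sub_of_hasDerivAt h2]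
    · ring
    · exact (continuousOn_const.div (by fun_prop) fun z hz => by
        have := h0 z hz; positivity).intervalIntegrable
  have h3 : IntervalIntegrable (fun z => p s / z ^ 2) volume s r :=
    (continuousOn_const.div (by fun_prop) fun z hz => by
        have := h0 z hz; positivity).intervalIntegrable
  simp only [sub_div]
  rw [intervalIntegral.integral_sub (hp.intervalIntegrable hs hr) h3, h1,
    ← intervalIntegral.integral_interval_sub_left (hp.intervalIntegrable one_pos hr)
      (hp.intervalIntegrable one_pos hs), Hfun, Hder]
  have := hr.ne'
  have := hs.ne'
  field_simp
  ring

/-- Strict positivity comes from the strict monotonicity of `p` alone, through `rel_eq`. -/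
lemma PressureOK.rel_pos (hp : PressureOK p) {r s : ℝ} (hr : 0 ≤ r) (hs : 0 < s) (hne : r ≠ s) :
    0 < Hfun p r - Hder p s * r + p s := by
  rcases hr.eq_or_lt with rfl | hr
  · have := hp.strictMono (mem_Ici.2 le_rfl) (mem_Ici.2 hs.le) hs
    rw [hp.2.2.1] at this
    simpa [Hfun_zero] using this
  rw [hp.rel_eq hr hs]
  apply mul_pos hr
  have hcont : ∀ u v : ℝ, 0 < u → u ≤ v →
      IntervalIntegrable (fun z => (p z - p s) / z ^ 2) volume u v := fun u v hu huv => by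
    apply ContinuousOn.intervalIntegrable
    rw [uIcc_of_le huv]
    refine ContinuousOn.div ((hp.1.mono fun z hz => ?_).sub continuousOn_const) (by fun_prop)
      fun z hz => ?_
    · rw [mem_Ici]; linarith [hz.1]
    · have : 0 < z := hu.trans_le hz.1
      positivity
  rcases lt_or_gt_of_ne hne with h | h
  · rw [intervalIntegral.integral_symm, ← intervalIntegral.integral_neg]
    apply intervalIntegral.intervalIntegral_pos_of_pos_on ((hcont r s hr h.le).neg) _ h
    intro z hz
    have h1 : 0 < z := hr.trans hz.1
    have := hp.strictMono (mem_Ici.2 h1.le) (mem_Ici.2 hs.le) hz.2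
    rw [Pi.neg_apply, ← neg_div]
    apply div_pos <;> [linarith; positivity]
  · apply intervalIntegral.intervalIntegral_pos_of_pos_on (hcont s r hs h.le) _ h
    intro z hz
    have h1 : 0 < z := hs.trans hz.1
    have := hp.strictMono (mem_Ici.2 hs.le) (mem_Ici.2 h1.le) hz.1
    apply div_pos <;> [linarith; positivity]

lemma rel_self (p : ℝ → ℝ) {s : ℝ} (hs : 0 < s) : Hfun p s - Hder p s * s + p s = 0 := by
  linarith [Hder_mul p hs]

lemma PressureOK.rel_nonneg (hp : PressureOK p) {r s : ℝ} (hr : 0 ≤ r) (hs : 0 < s) :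
    0 ≤ Hfun p r - Hder p s * r + p s := by
  by_cases h : r = s
  · subst h; rw [rel_self p hs]
  · exact (hp.rel_pos hr hs h).le

/-- Convexity and `p(0) = 0` give `p(z) ≤ κ z` near `0`, which keeps `H` bounded there although
`p(z)/z²` need not be integrable at `0`. -/
lemma PressureOK.bdd_Hfun (hp : PressureOK p) (C : ℝ) :
    ∃ B, ∀ r, 0 ≤ r → r ≤ C → |Hfun p r| ≤ B := by
  set C' := max C 1
  have hC' : 1 ≤ C' := le_max_right _ _
  have hlin : ∀ z, 0 < z → z ≤ C' → p z ≤ p C' * z := fun z hz hzC => by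
    have hc : p ((1 - z / C') • 0 + (z / C') • C') ≤ (1 - z / C') • p 0 + (z / C') • p C' :=
      hp.2.2.2.2.2 (mem_Ici.2 le_rfl) (mem_Ici.2 (by linarith : (0:ℝ) ≤ C')) (by
        rw [sub_nonneg, div_le_one (by linarith)]; exact hzC) (by positivity) (by ring)
    have e : z / C' * C' = z := by field_simp
    simp only [smul_eq_mul, mul_zero, zero_add, hp.2.2.1, e] at hc
    refine hc.trans ?_
    rw [mul_comm]
    exact mul_le_mul_of_nonneg_left (div_le_self hz.le hC') (hp.nonneg (by linarith))
  have hκ := hp.nonneg (by linarith : 0 ≤ C')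
  refine ⟨p C' * C' * C', fun r hr hrC => ?_⟩
  rcases hr.eq_or_lt with rfl | hr
  · rw [Hfun_zero, abs_zero]; positivity
  have hrC' : r ≤ C' := hrC.trans (le_max_left _ _)
  have hm : 0 < min 1 r := lt_min one_pos hr
  have h1 : |∫ z in (1:ℝ)..r, p z / z ^ 2| ≤ p C' / min 1 r * |r - 1| := by
    rw [← Real.norm_eq_abs]
    refine intervalIntegral.norm_integral_le_of_norm_le_const fun z hz => ?_
    have hz1 : min 1 r < z := hz.1
    have hz2 : z ≤ C' := hz.2.trans (max_le hC' hrC')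
    have hz0 : 0 < z := hm.trans hz1
    rw [Real.norm_eq_abs, abs_of_nonneg (div_nonneg (hp.nonneg hz0.le) (by positivity)),
      div_le_div_iff₀ (by positivity) hm]
    calc p z * min 1 r ≤ (p C' * z) * z :=
          mul_le_mul (hlin z hz0 hz2) hz1.le hm.le (by positivity)
      _ = p C' * z ^ 2 := by ring
  rw [Hfun, abs_mul, abs_of_pos hr]
  have h2 : |r - 1| ≤ C' := by rw [abs_le]; constructor <;> linarith
  have h3 : r ≤ C' * min 1 r := by
    rcases min_cases 1 r with h | h <;> rw [h.1] <;> nlinarith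
  calc r * |∫ z in (1:ℝ)..r, p z / z ^ 2| ≤ (C' * min 1 r) * (p C' / min 1 r * C') :=
        mul_le_mul h3 (h1.trans (mul_le_mul_of_nonneg_left h2 (by positivity))) (abs_nonneg _)
          (by positivity)
    _ = p C' * C' * C' := by field_simp

lemma PressureOK.measurable_p (hp : PressureOK p) {α : Type*} [MeasurableSpace α] {f : α → ℝ}
    (hf : Measurable f) (h0 : ∀ x, 0 ≤ f x) : Measurable fun x => p (f x) := by
  have h1 : Continuous fun y : ℝ => p (max y 0) :=
    hp.1.comp_continuous (by fun_prop) fun y => mem_Ici.2 (le_max_right _ _)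
  have h2 := h1.measurable.comp hf
  simpa [Function.comp_def, max_eq_left (h0 _)] using h2

lemma PressureOK.measurable_Hfun (hp : PressureOK p) {α : Type*} [MeasurableSpace α] {f : α → ℝ}
    (hf : Measurable f) (h0 : ∀ x, 0 ≤ f x) : Measurable fun x => Hfun p (f x) := by
  have h1 : Measurable ((Ioi (0:ℝ)).piecewise (Hfun p) fun _ => 0) :=
    hp.continuousOn_Hfun.measurable_piecewise continuousOn_const measurableSet_Ioi
  convert h1.comp hf using 2 with x
  rcases (h0 x).eq_or_lt with h | h
  · simp [← h, Hfun_zero]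
  · simp [piecewise, h]

lemma PressureOK.bdd_p (hp : PressureOK p) {r C : ℝ} (hr : 0 ≤ r) (hC : r ≤ C) :
    |p r| ≤ p C := by
  rw [abs_of_nonneg (hp.nonneg hr)]
  exact hp.strictMono.monotoneOn hr (mem_Ici.2 (hr.trans hC)) hC

end Pressure

/-! ### Rarefaction profiles and the sign of the relative energy flux -/

/-- Lipschitz profiles `(R,U)` of rarefaction waves: functions of `ξ = x₁/t` with `R` bounded away
from the vacuum and `U` nondecreasing that satisfy a.e. the Euler system in nonconservative form. No
limits at infinity are prescribed. -/
structure Profile (p R U : ℝ → ℝ) : Prop where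
  lipR : ∃ K, LipschitzWith K R
  lipU : ∃ K, LipschitzWith K U
  monoU : Monotone U
  lower : ∃ c : ℝ, 0 < c ∧ ∀ ξ, c ≤ R ξ
  ode : ∀ᵐ ξ, DifferentiableAt ℝ R ξ ∧ DifferentiableAt ℝ U ξ ∧
    (U ξ - ξ) * deriv R ξ + R ξ * deriv U ξ = 0 ∧
    R ξ * (U ξ - ξ) * deriv U ξ + deriv p (R ξ) * deriv R ξ = 0

/-- The values `f(x/t)`, `0 < x < 1`, converge to `c` in the mean as `t → 0+`. -/
def AvgTo (f : ℝ → ℝ) (c : ℝ) : Prop :=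
  Tendsto (fun t => ∫ x in (0:ℝ)..1, |f (x / t) - c|) (𝓝[>] 0) (𝓝 0)

/-- A function that is nondecreasing on `[M,∞)` lies there below its limit in the mean: if
`f ξ > c`, then `f (x/t) - c ≥ f ξ - c` on `1/2 < x < 1` for all small `t`. -/
lemma avg_le {f : ℝ → ℝ} {c M : ℝ} (hc : Continuous f) (hf : MonotoneOn f (Ici M))
    (h : AvgTo f c) {ξ : ℝ} (hξ : M ≤ ξ) : f ξ ≤ c := by
  by_contra! hlt
  have h1 : ∀ᶠ t in 𝓝[>] (0:ℝ), ∫ x in (0:ℝ)..1, |f (x / t) - c| < (f ξ - c) / 2 :=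
    h.eventually_lt_const (by linarith)
  set η := max ξ 1
  have hη : 0 < η := lt_of_lt_of_le one_pos (le_max_right _ _)
  have h2 : ∀ᶠ t in 𝓝[>] (0:ℝ), t ∈ Ioo 0 (1 / (2 * η)) := Ioo_mem_nhdsGT (by positivity)
  obtain ⟨t, ht1, ht2⟩ := (h1.and h2).exists
  have ht0 := ht2.1
  have hcont : Continuous fun x => |f (x / t) - c| := by fun_prop
  have h3 : ∫ x in (1/2:ℝ)..1, (f ξ - c) ≤ ∫ x in (1/2:ℝ)..1, |f (x / t) - c| := by
    apply intervalIntegral.integral_mono_on (by norm_num) (by simp)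
      (hcont.intervalIntegrable _ _)
    intro x hx
    have h4 : ξ ≤ x / t := by
      refine (le_max_left ξ 1).trans ?_
      rw [le_div_iff₀ ht0]
      have := ht2.2
      rw [lt_div_iff₀ (by positivity)] at this
      change η * t ≤ x
      linarith [hx.1]
    exact (sub_le_sub_right (hf hξ (hξ.trans h4) h4) c).trans (le_abs_self _)
  have h5 : 0 ≤ ∫ x in (0:ℝ)..(1/2), |f (x / t) - c| :=
    intervalIntegral.integral_nonneg (by norm_num) fun _ _ => abs_nonneg _
  have h6 := intervalIntegral.integral_add_adjacent_intervals
    (hcont.intervalIntegrable (μ := volume) 0 (1/2)) (hcont.intervalIntegrable (1/2) 1)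
  rw [intervalIntegral.integral_const, smul_eq_mul] at h3
  linarith

lemma comp_lip {f R : ℝ → ℝ} (hd : ∀ r, 0 < r → DifferentiableAt ℝ f r)
    (hf : ContinuousOn (deriv f) (Ioi 0)) {K : ℝ≥0} (hR : LipschitzWith K R) {c C : ℝ}
    (hc : 0 < c) (h : ∀ ξ, c ≤ R ξ ∧ R ξ ≤ C) : ∃ K, LipschitzWith K (fun ξ => f (R ξ)) := by
  have hpos : ∀ x ∈ Icc c C, 0 < x := fun x hx => hc.trans_le hx.1
  obtain ⟨B, hB⟩ := isCompact_Icc.exists_bound_of_continuousOn (hf.mono hpos)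
  have : LipschitzOnWith B.toNNReal f (Icc c C) := by
    apply (convex_Icc c C).lipschitzOnWith_of_nnnorm_deriv_le (fun x hx => hd x (hpos x hx))
    intro x hx
    rw [← NNReal.coe_le_coe, coe_nnnorm]
    exact (hB x hx).trans (Real.le_coe_toNNReal B)
  have h2 := this.comp (hR.lipschitzOnWith (s := univ)) (fun x _ => h x)
  exact ⟨_, lipschitzOnWith_univ.1 h2⟩

lemma mul_lip {f g : ℝ → ℝ} {K L : ℝ≥0} {A B : ℝ} (hf : LipschitzWith K f) (hg : LipschitzWith L g)
    (hA : ∀ x, |f x| ≤ A) (hB : ∀ x, |g x| ≤ B) : ∃ N, LipschitzWith N (fun x => f x * g x) := by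
  refine ⟨(K * B + A * L).toNNReal, LipschitzWith.of_dist_le_mul fun x y => ?_⟩
  refine le_trans ?_ (mul_le_mul_of_nonneg_right (Real.le_coe_toNNReal _) dist_nonneg)
  have h1 := hf.dist_le_mul x y
  have h2 := hg.dist_le_mul x y
  rw [Real.dist_eq] at h1 h2 ⊢
  have e : f x * g x - f y * g y = (f x - f y) * g x + f y * (g x - g y) := by ring
  rw [e]
  refine (abs_add_le _ _).trans ?_
  rw [abs_mul, abs_mul, add_mul]
  have hA0 := (abs_nonneg _).trans (hA 0)
  refine add_le_add ?_ ?_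
  · calc |f x - f y| * |g x| ≤ (K * dist x y) * B :=
        mul_le_mul h1 (hB x) (abs_nonneg _) (by positivity)
      _ = _ := by ring
  · calc |f y| * |g x - g y| ≤ A * (L * dist x y) := mul_le_mul (hA y) h2 (abs_nonneg _) hA0
      _ = _ := by ring

namespace Profile
variable {p R U : ℝ → ℝ}

/-- The reflection `x₁ ↦ -x₁` maps profiles to profiles. -/
lemma reflect (h : Profile p R U) : Profile p (fun ξ => R (-ξ)) (fun ξ => -U (-ξ)) where
  lipR := by
    obtain ⟨K, hK⟩ := h.lipR
    exact ⟨K * 1, hK.comp LipschitzWith.id.neg⟩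
  lipU := by
    obtain ⟨K, hK⟩ := h.lipU
    exact ⟨K * 1, (hK.comp LipschitzWith.id.neg).neg⟩
  monoU := fun x y hxy => neg_le_neg (h.monoU (neg_le_neg hxy))
  lower := by
    obtain ⟨c, hc, h⟩ := h.lower
    exact ⟨c, hc, fun _ => h _⟩
  ode := by
    have := ae_div_of_ae h.ode (s := -1) (by norm_num)
    filter_upwards [this] with ξ hξ
    rw [div_neg, div_one] at hξ
    obtain ⟨hR, hU, h1, h2⟩ := hξ
    have dR : HasDerivAt (fun ξ => R (-ξ)) (-deriv R (-ξ)) ξ :=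
      (HasDerivAt.comp ξ hR.hasDerivAt (hasDerivAt_neg ξ)).congr_deriv (by ring)
    have dU : HasDerivAt (fun ξ => -U (-ξ)) (deriv U (-ξ)) ξ :=
      (HasDerivAt.comp ξ hU.hasDerivAt (hasDerivAt_neg ξ)).neg.congr_deriv (by ring)
    refine ⟨dR.differentiableAt, dU.differentiableAt, ?_, ?_⟩
    · rw [dR.deriv, dU.deriv]; linarith
    · rw [dR.deriv, dU.deriv]; linarith

lemma pos (h : Profile p R U) (ξ : ℝ) : 0 < R ξ := by
  obtain ⟨c, hc, h⟩ := h.lower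
  exact hc.trans_le (h ξ)

/-- Beyond the largest sound speed the profile is constant: there `(U-ξ)² > p'(R)`, so the
homogeneous linear system for `(R',U')` is nonsingular. To bound `p'(R)`, note that `R` is monotone
for `ξ > sup U` and hence bounded by its mean limit. -/
lemma eventually_const (hp : PressureOK p) (h : Profile p R U) {r₀ u₀ : ℝ} (hR : AvgTo R r₀)
    (hU : AvgTo U u₀) : ∃ M, ∀ ξ, M ≤ ξ → R ξ = r₀ ∧ U ξ = u₀ := by
  obtain ⟨KR, hKR⟩ := h.lipR
  obtain ⟨KU, hKU⟩ := h.lipU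
  obtain ⟨c, hc, hcR⟩ := h.lower
  have hUle : ∀ ξ, U ξ ≤ u₀ := fun ξ => avg_le hKU.continuous (h.monoU.monotoneOn _) hU le_rfl
  have hmono : MonotoneOn R (Ici u₀) := by
    intro x hx y hy hxy
    have := ac_antitone hxy (ac_of_lip hKR x y).neg ?_
    · simpa using this
    filter_upwards [h.ode] with ξ hξ h1 h2
    obtain ⟨_, _, h3, _⟩ := hξ
    rw [deriv.neg]
    have h4 : 0 < ξ - U ξ := by
      have := hUle ξ
      have : u₀ ≤ x := hx
      linarith
    have h5 : 0 ≤ R ξ * deriv U ξ := mul_nonneg (h.pos ξ).le (h.monoU.deriv_nonneg)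
    by_contra! h6
    nlinarith
  have hRle : ∀ ξ, u₀ ≤ ξ → R ξ ≤ r₀ := fun ξ hξ => avg_le hKR.continuous hmono hR hξ
  obtain ⟨P, hP⟩ := isCompact_Icc.exists_bound_of_continuousOn
    (hp.cont_deriv.mono (fun x (hx : x ∈ Icc c r₀) => hc.trans_le hx.1))
  set M := u₀ + |P| + 1
  have hz : ∀ᵐ ξ, M < ξ → deriv R ξ = 0 ∧ deriv U ξ = 0 := by
    filter_upwards [h.ode] with ξ hξ hM
    obtain ⟨_, _, h3, h4⟩ := hξ
    have h5 : 1 + |P| < ξ - U ξ := by linarith [hUle ξ]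
    have h6 : deriv p (R ξ) ≤ |P| :=
      (le_abs_self _).trans ((hP _ ⟨hcR ξ, hRle ξ (by linarith [abs_nonneg P])⟩).trans
        (le_abs_self _))
    have h7 : deriv p (R ξ) < (U ξ - ξ) ^ 2 := by nlinarith [abs_nonneg P]
    have h8 : R ξ * ((U ξ - ξ) ^ 2 - deriv p (R ξ)) * deriv U ξ = 0 := by
      linear_combination (U ξ - ξ) * h4 - deriv p (R ξ) * h3
    have h9 : deriv U ξ = 0 := by
      rcases mul_eq_zero.1 h8 with h' | h'
      · exact absurd h' (mul_pos (h.pos ξ) (by linarith)).ne'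
      · exact h'
    refine ⟨?_, h9⟩
    rw [h9, mul_zero, add_zero] at h3
    rcases mul_eq_zero.1 h3 with h | h
    · linarith [abs_nonneg P]
    · exact h
  have key : ∀ {f : ℝ → ℝ} {K : ℝ≥0} {k : ℝ}, LipschitzWith K f →
      (∀ᵐ ξ, M < ξ → deriv f ξ = 0) → AvgTo f k → ∀ ξ, M ≤ ξ → f ξ = k := by
    intro f K k hf hd hk
    have hconst : ∀ ξ, M ≤ ξ → f ξ = f M := fun ξ hξ => by
      rw [← sub_eq_zero, ← lip_ftc hf M ξ]
      rw [intervalIntegral.integral_of_le hξ]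
      apply integral_eq_zero_of_ae
      rw [EventuallyEq, ae_restrict_iff' measurableSet_Ioc]
      filter_upwards [hd] with x hx hm using hx hm.1
    intro ξ hξ
    apply le_antisymm
    · refine avg_le hf.continuous (fun x hx y hy _ => ?_) hk hξ
      rw [hconst x hx, hconst y hy]
    · have : AvgTo (fun x => -f x) (-k) := by
        refine hk.congr fun t => ?_
        congr 1; ext x
        rw [← abs_neg]; congr 1; ring
      have := avg_le hf.continuous.neg (fun x hx y hy _ => ?_) this hξ
      · exact neg_le_neg_iff.1 this
      · change -f x ≤ -f y
        rw [hconst x hx, hconst y hy]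
  refine ⟨M, fun ξ hξ => ⟨?_, ?_⟩⟩
  · exact key hKR (by filter_upwards [hz] with x hx hm using (hx hm).1) hR ξ hξ
  · exact key hKU (by filter_upwards [hz] with x hx hm using (hx hm).2) hU ξ hξ

end Profile

/-- Relative energy of the state `(r,u)` with respect to `(s,v)`; the linear part is rearranged by
means of `s H'(s) - H(s) = p(s)`. -/
noncomputable def relE (p : ℝ → ℝ) (r u s v : ℝ) : ℝ :=
  1 / 2 * r * (u - v) ^ 2 + (Hfun p r - Hder p s * r + p s)

/-- Relative energy flux in the direction `x₁`. -/
noncomputable def relQ (p : ℝ → ℝ) (r u s v : ℝ) : ℝ :=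
  u * relE p r u s v + (p r - p s) * (u - v)

lemma relE_nonneg {p : ℝ → ℝ} (hp : PressureOK p) {r u s v : ℝ} (hr : 0 ≤ r) (hs : 0 < s) :
    0 ≤ relE p r u s v :=
  add_nonneg (by positivity) (hp.rel_nonneg hr hs)

namespace Profile
variable {p R U : ℝ → ℝ}

lemma lip_p (hp : PressureOK p) (h : Profile p R U) {C : ℝ} (hC : ∀ ξ, R ξ ≤ C) :
    ∃ K, LipschitzWith K (fun ξ => p (R ξ)) := by
  obtain ⟨K, hK⟩ := h.lipR
  obtain ⟨c, hc, hcR⟩ := h.lower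
  exact comp_lip (fun r hr => (hp.hasDerivAt hr).differentiableAt) hp.cont_deriv hK hc
    fun ξ => ⟨hcR ξ, hC ξ⟩

lemma lip_Hder (hp : PressureOK p) (h : Profile p R U) {C : ℝ} (hC : ∀ ξ, R ξ ≤ C) :
    ∃ K, LipschitzWith K (fun ξ => Hder p (R ξ)) := by
  obtain ⟨K, hK⟩ := h.lipR
  obtain ⟨c, hc, hcR⟩ := h.lower
  refine comp_lip (fun r hr => (hp.hasDerivAt_Hder hr).differentiableAt) ?_ hK hc
    fun ξ => ⟨hcR ξ, hC ξ⟩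
  refine ContinuousOn.congr (f := fun r => deriv p r / r)
    (hp.cont_deriv.div continuousOn_id fun x hx => (ne_of_gt hx)) fun r hr => ?_
  exact (hp.hasDerivAt_Hder hr).deriv

/-- The flux of relative energy of the right state with respect to the fan points outwards at every
`ξ ≥ 0`. Indeed, with `E = relE` and `q = relQ` along the fan, `q - ξ E` is nonincreasing, and it
vanishes for large `ξ`. -/
lemma relQ_nonneg (hp : PressureOK p) (h : Profile p R U) {C : ℝ} (hC : ∀ ξ, R ξ ≤ C)
    {M r₀ u₀ : ℝ} (hr₀ : 0 < r₀) (hM : ∀ ξ, M ≤ ξ → R ξ = r₀ ∧ U ξ = u₀) {ξ : ℝ} (hξ : 0 ≤ ξ) :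
    0 ≤ relQ p r₀ u₀ (R ξ) (U ξ) := by
  obtain ⟨KR, hKR⟩ := h.lipR
  obtain ⟨KU, hKU⟩ := h.lipU
  obtain ⟨KP, hKP⟩ := h.lip_p hp hC
  obtain ⟨KH, hKH⟩ := h.lip_Hder hp hC
  set E : ℝ → ℝ := fun ξ => 1 / 2 * r₀ * ((u₀ - U ξ) * (u₀ - U ξ)) +
    (Hfun p r₀ - r₀ * Hder p (R ξ) + p (R ξ)) with hE
  have hErel : ∀ ξ, E ξ = relE p r₀ u₀ (R ξ) (U ξ) := fun ξ => by simp only [hE, relE]; ring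
  set Q : ℝ → ℝ := fun ξ => (u₀ - ξ) * E ξ + (p r₀ - p (R ξ)) * (u₀ - U ξ) with hQ
  have hac : ∀ a b, AbsolutelyContinuousOnInterval Q a b := fun a b => by
    have c : ∀ k : ℝ, AbsolutelyContinuousOnInterval (fun _ => k) a b := fun k =>
      ac_of_lip (LipschitzWith.const k) a b
    have aU : AbsolutelyContinuousOnInterval (fun ξ => u₀ - U ξ) a b := (c u₀).sub (ac_of_lip hKU a b)
    have aP := ac_of_lip hKP a b
    have aH := ac_of_lip hKH a b
    have aE : AbsolutelyContinuousOnInterval E a b :=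
      ((aU.mul aU).const_mul _).add (((c _).sub (aH.const_mul r₀)).add aP)
    exact (((c u₀).sub (ac_of_lip LipschitzWith.id a b)).mul aE).add (((c _).sub aP).mul aU)
  have hd : ∀ᵐ ξ, deriv Q ξ ≤ 0 := by
    filter_upwards [h.ode] with ξ hξ
    obtain ⟨dR, dU, h1, h2⟩ := hξ
    have hRpos := h.pos ξ
    have dU' : HasDerivAt (fun ξ => u₀ - U ξ) (-deriv U ξ) ξ := by
      simpa using dU.hasDerivAt.const_sub u₀
    have dP : HasDerivAt (fun ξ => p (R ξ)) (deriv p (R ξ) * deriv R ξ) ξ :=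
      (hp.hasDerivAt hRpos).comp ξ dR.hasDerivAt
    have dH : HasDerivAt (fun ξ => Hder p (R ξ)) (deriv p (R ξ) / R ξ * deriv R ξ) ξ :=
      HasDerivAt.comp (h₂ := Hder p) ξ (hp.hasDerivAt_Hder hRpos) dR.hasDerivAt
    have dE : HasDerivAt E _ ξ :=
      ((dU'.mul dU').const_mul (1 / 2 * r₀)).add (((dH.const_mul r₀).const_sub (Hfun p r₀)).add dP)
    have dQ : HasDerivAt Q _ ξ :=
      (((hasDerivAt_id ξ).const_sub u₀).mul dE).add ((dP.const_sub (p r₀)).mul dU')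
    rw [dQ.deriv]
    have hE0 : 0 ≤ E ξ := by rw [hErel]; exact relE_nonneg hp hr₀.le hRpos
    have hu : 0 ≤ deriv U ξ := h.monoU.deriv_nonneg
    have htan := hp.tangent hr₀.le hRpos
    have hk : deriv p (R ξ) / R ξ * deriv R ξ = -((U ξ - ξ) * deriv U ξ) := by
      field_simp; linarith
    have hv : (U ξ - ξ) ^ 2 * deriv U ξ = deriv p (R ξ) * deriv U ξ := by
      have : R ξ * ((U ξ - ξ) ^ 2 * deriv U ξ - deriv p (R ξ) * deriv U ξ) = 0 := by
        linear_combination (U ξ - ξ) * h2 - deriv p (R ξ) * h1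
      rcases mul_eq_zero.1 this with h | h
      · exact absurd h hRpos.ne'
      · linarith
    have hpr : deriv p (R ξ) * deriv R ξ = -(R ξ * (U ξ - ξ) * deriv U ξ) := by linarith
    rw [hk, hpr]
    have hgoal : 0 ≤ deriv U ξ * (r₀ * (u₀ - U ξ) ^ 2 +
        (p r₀ - p (R ξ) - deriv p (R ξ) * (r₀ - R ξ))) :=
      mul_nonneg hu (add_nonneg (by positivity) (by linarith))
    simp only [id]
    clear_value E
    have e : ∀ x y : ℝ, y + x = 0 → 0 ≤ y → x ≤ 0 := fun x y _ _ => by linarith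
    refine e _ (E ξ + deriv U ξ * (r₀ * (u₀ - U ξ) ^ 2 +
        (p r₀ - p (R ξ) - deriv p (R ξ) * (r₀ - R ξ)))) ?_ (by linarith)
    linear_combination (r₀ - R ξ) * hv
  have hQ0 : 0 ≤ Q ξ := by
    set b := max ξ M
    have h1 : Q b ≤ Q ξ := ac_antitone (le_max_left _ _) (hac _ _)
      (by filter_upwards [hd] with x hx _ _ using hx)
    have h2 : Q b = 0 := by
      obtain ⟨e1, e2⟩ := hM b (le_max_right _ _)
      simp only [hQ, hE, e1, e2]
      have := rel_self p hr₀
      linear_combination (u₀ - b) * this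
    linarith
  have hE0 : 0 ≤ ξ * E ξ := mul_nonneg hξ (by rw [hErel]; exact relE_nonneg hp hr₀.le (h.pos ξ))
  have : relQ p r₀ u₀ (R ξ) (U ξ) = Q ξ + ξ * E ξ := by
    rw [relQ, ← hErel]; simp only [hQ]; ring
  linarith

/-- The counterpart of `relQ_nonneg` at the left end, by reflection. -/
lemma relQ_nonpos (hp : PressureOK p) (h : Profile p R U) {C : ℝ} (hC : ∀ ξ, R ξ ≤ C)
    {M r₀ u₀ : ℝ} (hr₀ : 0 < r₀) (hM : ∀ ξ, ξ ≤ -M → R ξ = r₀ ∧ U ξ = u₀) {ξ : ℝ} (hξ : ξ ≤ 0) :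
    relQ p r₀ u₀ (R ξ) (U ξ) ≤ 0 := by
  have := h.reflect.relQ_nonneg hp (fun ξ => hC (-ξ)) (M := M) (u₀ := -u₀) hr₀
    (fun ξ hξ => by
      obtain ⟨e1, e2⟩ := hM (-ξ) (by linarith)
      exact ⟨e1, by rw [e2]⟩) (ξ := -ξ) (by linarith)
  rw [neg_neg] at this
  have e : relQ p r₀ (-u₀) (R ξ) (-U ξ) = -relQ p r₀ u₀ (R ξ) (U ξ) := by
    simp only [relQ, relE]; ring
  linarith

end Profile

/-! ### Profiles of rarefaction waves -/

lemma hasDerivAt_div_self_var {y t : ℝ} (ht : t ≠ 0) :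
    HasDerivAt (fun s => y / s) (-y / t ^ 2) t := by
  refine ((hasDerivAt_const t y).div (hasDerivAt_id t) ht).congr_deriv ?_
  simp

/-- At almost every fixed time the Euler system holds for a.e. `x`; since the profiles are Lipschitz,
the chain rule turns it into the ordinary differential equations of `Profile`. -/
lemma wave_profile {T : ℝ} (hT : 0 < T) {p : ℝ → ℝ} (hp : PressureOK p) {ρL ρR u1L u1R : ℝ}
    {R U : ℝ → ℝ} (h : IsRarefactionWave T p ρL ρR u1L u1R R U) : Profile p R U where
  lipR := h.lipR
  lipU := h.lipU
  monoU := h.monoU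
  lower := h.lower
  ode := by
    have h1 := h.euler
    rw [Measure.volume_eq_prod, ← Measure.prod_restrict, Measure.restrict_univ] at h1
    have h2 := Measure.ae_ae_of_ae_prod h1
    have hne : (ae (volume.restrict (Ioo 0 T))).NeBot := by
      rw [ae_neBot, Ne, Measure.restrict_eq_zero, Real.volume_Ioo]
      simp [hT]
    obtain ⟨t, h3, ht⟩ := (h2.and (ae_restrict_mem measurableSet_Ioo)).exists
    rw [Measure.volume_eq_prod] at h3
    have h4 := Measure.ae_ae_of_ae_prod h3
    have ht0 : t ≠ 0 := ht.1.ne'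
    obtain ⟨KR, hKR⟩ := h.lipR
    obtain ⟨KU, hKU⟩ := h.lipU
    obtain ⟨c, hc, hcR⟩ := h.lower
    apply ae_of_ae_div ht0
    filter_upwards [ae_div_of_ae hKR.ae_differentiableAt_real ht0,
      ae_div_of_ae hKU.ae_differentiableAt_real ht0, h4] with y hR hU h5
    obtain ⟨_, -, e1, e2⟩ := h5.exists
    refine ⟨hR, hU, ?_⟩
    have dy : HasDerivAt (fun y => y / t) (1 / t) y := (hasDerivAt_id y).div_const t
    have dt := hasDerivAt_div_self_var (y := y) ht0
    have Rt : HasDerivAt (fun s => R (y / s)) _ t := HasDerivAt.comp t hR.hasDerivAt dt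
    have Ut : HasDerivAt (fun s => U (y / s)) _ t := HasDerivAt.comp t hU.hasDerivAt dt
    have Ry : HasDerivAt (fun y => R (y / t)) _ y := HasDerivAt.comp y hR.hasDerivAt dy
    have Uy : HasDerivAt (fun y => U (y / t)) _ y := HasDerivAt.comp y hU.hasDerivAt dy
    have py : HasDerivAt (fun y => p (R (y / t))) _ y :=
      HasDerivAt.comp (h₂ := p) y (hp.hasDerivAt (hc.trans_le (hcR (y / t)))) Ry
    rw [Rt.deriv, (Ry.fun_mul Uy).deriv] at e1
    rw [(Rt.fun_mul Ut).deriv, ((Ry.fun_mul (Uy.fun_pow 2)).fun_add py).deriv] at e2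
    field_simp at e1 e2
    set r' := deriv R (y / t)
    set u' := deriv U (y / t)
    constructor
    · field_simp
      linear_combination e1
    · field_simp
      push_cast at e2
      simp only [pow_one] at e2
      linear_combination e2 - U (y / t) * e1

/-- The initial condition prescribes the mean limits of the profiles at `±∞`, those at `-∞` being
phrased through the reflected profile. -/
lemma wave_avg {T : ℝ} {p : ℝ → ℝ} {ρL ρR u1L u1R : ℝ}
    {R U : ℝ → ℝ} (h : IsRarefactionWave T p ρL ρR u1L u1R R U) :
    AvgTo R ρR ∧ AvgTo U u1R ∧ AvgTo (fun ξ => R (-ξ)) ρL ∧ AvgTo (fun ξ => -U (-ξ)) (-u1L) := by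
  obtain ⟨KR, hKR⟩ := h.lipR
  obtain ⟨KU, hKU⟩ := h.lipU
  have cR := hKR.continuous
  have cU := hKU.continuous
  have h1 := h.init 1 one_pos
  -- the integrand splits into its continuous parts on the two sides of `x₁ = 0`
  have key : ∀ t : ℝ, ∫ x in (Ioo (-1) 1 ×ˢ Ioo (-1) 1 : Set (ℝ × ℝ)),
      (|R (x.1 / t) - riem ρL ρR x| + |U (x.1 / t) - riem u1L u1R x|) =
      2 * ((∫ y in (0:ℝ)..1, |R (-(y / t)) - ρL|) + (∫ y in (0:ℝ)..1, |-U (-(y / t)) - -u1L|) +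
      ((∫ y in (0:ℝ)..1, |R (y / t) - ρR|) + ∫ y in (0:ℝ)..1, |U (y / t) - u1R|)) := by
    intro t
    set g : ℝ → ℝ := fun y => |R (y / t) - riem ρL ρR (y, 0)| + |U (y / t) - riem u1L u1R (y, 0)|
    have e1 : ∫ x in (Ioo (-1) 1 ×ˢ Ioo (-1) 1 : Set (ℝ × ℝ)),
      (|R (x.1 / t) - riem ρL ρR x| + |U (x.1 / t) - riem u1L u1R x|) = 2 * ∫ y in (-1:ℝ)..1, g y := by
      rw [intervalIntegral.integral_of_le (by norm_num), integral_Ioc_eq_integral_Ioo,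
        Measure.volume_eq_prod, ← Measure.prod_restrict]
      have := integral_fun_fst (μ := volume.restrict (Ioo (-1:ℝ) 1))
        (ν := volume.restrict (Ioo (-1:ℝ) 1)) g
      rw [show (∫ x, (|R (x.1 / t) - riem ρL ρR x| + |U (x.1 / t) - riem u1L u1R x|)
        ∂((volume.restrict (Ioo (-1:ℝ) 1)).prod (volume.restrict (Ioo (-1:ℝ) 1)))) =
        ∫ x, g x.1 ∂((volume.restrict (Ioo (-1:ℝ) 1)).prod (volume.restrict (Ioo (-1:ℝ) 1))) from rfl,
        this]
      norm_num
    have cL : Continuous fun y => |R (y / t) - ρL| + |U (y / t) - u1L| := by fun_prop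
    have cRt : Continuous fun y => |R (y / t) - ρR| + |U (y / t) - u1R| := by fun_prop
    have gL : EqOn g (fun y => |R (y / t) - ρL| + |U (y / t) - u1L|) (uIoc (-1) 0) := fun y hy => by
      rw [uIoc_of_le (by norm_num)] at hy
      simp [g, riem, hy.2]
    have gR : EqOn g (fun y => |R (y / t) - ρR| + |U (y / t) - u1R|) (uIoc 0 1) := fun y hy => by
      rw [uIoc_of_le (by norm_num)] at hy
      simp [g, riem, not_le.2 hy.1]
    have iL : IntervalIntegrable g volume (-1) 0 :=
      (intervalIntegrable_congr gL).2 (cL.intervalIntegrable _ _)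
    have iR : IntervalIntegrable g volume 0 1 :=
      (intervalIntegrable_congr gR).2 (cRt.intervalIntegrable _ _)
    rw [e1, ← intervalIntegral.integral_add_adjacent_intervals iL iR,
      intervalIntegral.integral_congr_ae (Eventually.of_forall gL),
      intervalIntegral.integral_congr_ae (Eventually.of_forall gR),
      intervalIntegral.integral_add (Continuous.intervalIntegrable (by fun_prop) _ _)
        (Continuous.intervalIntegrable (by fun_prop) _ _),
      intervalIntegral.integral_add (Continuous.intervalIntegrable (by fun_prop) _ _)
        (Continuous.intervalIntegrable (by fun_prop) _ _)]
    have sub : ∀ f : ℝ → ℝ, ∫ y in (-1:ℝ)..0, f y = ∫ y in (0:ℝ)..1, f (-y) := fun f => by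
      rw [intervalIntegral.integral_comp_neg]; simp
    rw [sub, sub]
    have abs_e : ∀ x : ℝ, |-U x - -u1L| = |U x - u1L| := fun x => by
      rw [← abs_neg]; congr 1; ring
    simp only [neg_div, abs_e]
  simp only [key] at h1
  have nn : ∀ f : ℝ → ℝ, 0 ≤ ∫ y in (0:ℝ)..1, |f y| := fun f =>
    intervalIntegral.integral_nonneg (by norm_num) fun _ _ => abs_nonneg _
  refine ⟨squeeze_zero (fun t => nn _) (fun t => ?_) h1, squeeze_zero (fun t => nn _) (fun t => ?_) h1,
    squeeze_zero (fun t => nn _) (fun t => ?_) h1, squeeze_zero (fun t => nn _) (fun t => ?_) h1⟩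
  all_goals
    have n1 := nn fun y => R (-(y / t)) - ρL
    have n2 := nn fun y => -U (-(y / t)) - -u1L
    have n3 := nn fun y => R (y / t) - ρR
    have n4 := nn fun y => U (y / t) - u1R
    linarith

/-- A rarefaction wave is constant outside a bounded fan and globally bounded. -/
lemma wave_ends {T : ℝ} (hT : 0 < T) {p : ℝ → ℝ} (hp : PressureOK p) {ρL ρR u1L u1R : ℝ}
    {R U : ℝ → ℝ} (h : IsRarefactionWave T p ρL ρR u1L u1R R U) :
    ∃ M C : ℝ, (∀ ξ, M ≤ ξ → R ξ = ρR ∧ U ξ = u1R) ∧ (∀ ξ, ξ ≤ -M → R ξ = ρL ∧ U ξ = u1L) ∧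
      ∀ ξ, R ξ ≤ C ∧ |U ξ| ≤ C := by
  have hP := wave_profile hT hp h
  obtain ⟨a1, a2, a3, a4⟩ := wave_avg h
  obtain ⟨M1, hM1⟩ := hP.eventually_const hp a1 a2
  obtain ⟨M2, hM2⟩ := hP.reflect.eventually_const hp a3 a4
  obtain ⟨KR, hKR⟩ := h.lipR
  obtain ⟨KU, hKU⟩ := h.lipU
  set M := max M1 M2
  have hr : ∀ ξ, M ≤ ξ → R ξ = ρR ∧ U ξ = u1R := fun ξ hξ => hM1 ξ ((le_max_left _ _).trans hξ)
  have hl : ∀ ξ, ξ ≤ -M → R ξ = ρL ∧ U ξ = u1L := fun ξ hξ => by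
    have := hM2 (-ξ) (by linarith [le_max_right M1 M2])
    rw [neg_neg, neg_inj] at this
    exact this
  obtain ⟨B, hB⟩ := (isCompact_Icc (a := -M) (b := M)).exists_bound_of_continuousOn
    (hKR.continuous.prodMk hKU.continuous).continuousOn
  refine ⟨M, max B (max (max ρR ρL) (max |u1R| |u1L|)), hr, hl, fun ξ => ?_⟩
  by_cases h1 : M ≤ ξ
  · rw [(hr ξ h1).1, (hr ξ h1).2]; constructor <;> simp
  by_cases h2 : ξ ≤ -M
  · rw [(hl ξ h2).1, (hl ξ h2).2]; constructor <;> simp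
  have := hB ξ ⟨by linarith, by linarith⟩
  rw [Prod.norm_def, max_le_iff, Real.norm_eq_abs, Real.norm_eq_abs] at this
  exact ⟨((le_abs_self _).trans this.1).trans (le_max_left _ _), this.2.trans (le_max_left _ _)⟩

/-! ### Weak formulations tested with self-similar functions -/

lemma cont_time {G : ℝ → ℝ} (hG : Continuous G) {τ ε : ℝ} (hτ : 0 ≤ τ) (hε : 0 < ε) (b : ℝ) :
    ContinuousOn (fun t => G (b / (t + ε))) (uIcc 0 τ) := by
  rw [uIcc_of_le hτ]
  exact hG.comp_continuousOn (continuousOn_const.div (by fun_prop) fun t ht => by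
    have := ht.1; positivity)

/-- A balance law tested with `C¹` functions of the similarity variable `x₁/(t+ε)` can be tested
with bounded Lipschitz ones. -/
lemma selfsim_extend {a τ ε : ℝ} (hτ : 0 ≤ τ) (hε : 0 < ε) {k : ℝ → ℝ × ℝ → ℝ}
    (hk : Measurable (Function.uncurry k)) {Ck : ℝ}
    (hkb : ∀ t ∈ Ioc 0 τ, ∀ x ∈ Dom a, |k t x| ≤ Ck) {A A₀ : ℝ × ℝ → ℝ} (hA : Measurable A)
    (hA₀ : Measurable A₀) {C : ℝ} (hAb : ∀ x, |A x| ≤ C) (hA₀b : ∀ x, |A₀ x| ≤ C) {c₁ c₂ : ℝ}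
    (hid : ∀ G : ℝ → ℝ, ContDiff ℝ 1 G →
      (∫ x in Dom a, (A x * G (x.1 / (τ + ε)) - A₀ x * G (x.1 / ε))) +
        (∫ t in (0:ℝ)..τ, (c₁ * G (a / (t + ε)) - c₂ * G (-a / (t + ε)))) =
      ∫ t in (0:ℝ)..τ, ∫ x in Dom a, k t x * deriv G (x.1 / (t + ε)))
    {F : ℝ → ℝ} {K : ℝ≥0} (hF : LipschitzWith K F) {B : ℝ} (hB : ∀ x, |F x| ≤ B) :
    (∫ x in Dom a, (A x * F (x.1 / (τ + ε)) - A₀ x * F (x.1 / ε))) +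
        (∫ t in (0:ℝ)..τ, (c₁ * F (a / (t + ε)) - c₂ * F (-a / (t + ε)))) =
      ∫ t in (0:ℝ)..τ, ∫ x in Dom a, k t x * deriv F (x.1 / (t + ε)) := by
  obtain ⟨G, hG1, hG2, hG3, hG4, hG5⟩ := exists_smooth_approx hF
  have hC : 0 ≤ C := (abs_nonneg _).trans (hAb 0)
  have hGb : ∀ n x, |G n x| ≤ K + B := fun n x => by
    have : G n x = (G n x - F x) + F x := by ring
    rw [this]
    exact (abs_add_le _ _).trans (add_le_add (hG3 n x) (hB x))
  have l1 : Tendsto (fun n => ∫ x in Dom a, (A x * G n (x.1 / (τ + ε)) - A₀ x * G n (x.1 / ε)))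
      atTop (𝓝 (∫ x in Dom a, (A x * F (x.1 / (τ + ε)) - A₀ x * F (x.1 / ε)))) := by
    refine tendsto_integral_of_dominated_convergence (fun _ => C * (K + B) + C * (K + B))
      (fun n => ?_) (integrable_const _) (fun n => Eventually.of_forall fun x => ?_)
      (Eventually.of_forall fun x => ?_)
    · have := (hG1 n).continuous.measurable
      exact Measurable.aestronglyMeasurable (by fun_prop)
    · rw [Real.norm_eq_abs]
      refine (abs_sub _ _).trans ?_
      rw [abs_mul, abs_mul]
      exact add_le_add (mul_le_mul (hAb x) (hGb _ _) (abs_nonneg _) hC)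
        (mul_le_mul (hA₀b x) (hGb _ _) (abs_nonneg _) hC)
    · exact ((hG2 _).const_mul _).sub ((hG2 _).const_mul _)
  have l2 : Tendsto (fun n => ∫ t in (0:ℝ)..τ, (c₁ * G n (a / (t + ε)) - c₂ * G n (-a / (t + ε))))
      atTop (𝓝 (∫ t in (0:ℝ)..τ, (c₁ * F (a / (t + ε)) - c₂ * F (-a / (t + ε))))) := by
    refine intervalIntegral.tendsto_integral_filter_of_dominated_convergence
      (fun _ => |c₁| * (K + B) + |c₂| * (K + B)) (Eventually.of_forall fun n => ?_)
      (Eventually.of_forall fun n => Eventually.of_forall fun t _ => ?_)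
      intervalIntegrable_const (Eventually.of_forall fun t _ => ?_)
    · have := (hG1 n).continuous.measurable
      exact Measurable.aestronglyMeasurable (by fun_prop)
    · rw [Real.norm_eq_abs]
      refine (abs_sub _ _).trans ?_
      rw [abs_mul, abs_mul]
      exact add_le_add (mul_le_mul_of_nonneg_left (hGb _ _) (abs_nonneg _))
        (mul_le_mul_of_nonneg_left (hGb _ _) (abs_nonneg _))
    · exact ((hG2 _).const_mul _).sub ((hG2 _).const_mul _)
  have l3 := tendsto_selfsim (a := a) hτ hε hk hkb (fun n => measurable_deriv (G n)) hG4
    (by filter_upwards [hF.ae_differentiableAt_real] with ξ hξ using hG5 ξ hξ)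
  refine tendsto_nhds_unique (l1.add l2) ?_
  simpa only [hid _ (hG1 _)] using l3

/-- A smooth positive function of time equal to `t + ε` for `t ≥ 0`. -/
noncomputable def shiftTime (ε t : ℝ) : ℝ :=
  1 + Real.smoothTransition (2 * t / ε + 1) * (t + ε - 1)

lemma shiftTime_of_nonneg {ε t : ℝ} (hε : 0 < ε) (ht : 0 ≤ t) : shiftTime ε t = t + ε := by
  have h : 0 ≤ 2 * t / ε := by positivity
  rw [shiftTime, Real.smoothTransition.one_of_one_le (by linarith)]
  ring

lemma shiftTime_pos {ε : ℝ} (hε : 0 < ε) (t : ℝ) : 0 < shiftTime ε t := by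
  rw [shiftTime]
  set χ := Real.smoothTransition (2 * t / ε + 1) with hχ
  by_cases h : 2 * t / ε + 1 ≤ 0
  · rw [hχ, Real.smoothTransition.zero_of_nonpos h]; norm_num
  · have h1 : 0 < t + ε := by
      have : 0 < (2 * t / ε + 1) * ε := mul_pos (not_le.1 h) hε
      have e : (2 * t / ε + 1) * ε = 2 * t + ε := by field_simp
      linarith
    have h2 : 0 < χ := Real.smoothTransition.pos_of_pos (not_le.1 h)
    have h3 : χ ≤ 1 := Real.smoothTransition.le_one _
    nlinarith [mul_pos h2 h1]

lemma contDiff_shiftTime (ε : ℝ) : ContDiff ℝ 1 (shiftTime ε) := by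
  have h : ContDiff ℝ 1 Real.smoothTransition := Real.smoothTransition.contDiff
  unfold shiftTime
  exact contDiff_const.add ((h.comp (by fun_prop)).mul (by fun_prop))

lemma contDiff_selfsim {G : ℝ → ℝ} (hG : ContDiff ℝ 1 G) {ε : ℝ} (hε : 0 < ε) :
    ContDiff ℝ 1 (fun z : ℝ × (ℝ × ℝ) => G (z.2.1 / shiftTime ε z.1)) := by
  refine hG.comp (ContDiff.div (by fun_prop) ((contDiff_shiftTime ε).comp contDiff_fst) ?_)
  exact fun z => (shiftTime_pos hε z.1).ne'

lemma hasDerivAt_selfsim_t {G : ℝ → ℝ} (hG : ContDiff ℝ 1 G) {ε t : ℝ} (hε : 0 < ε)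
    (ht : 0 < t) (y : ℝ) :
    HasDerivAt (fun s => G (y / shiftTime ε s))
    (deriv G (y / (t + ε)) * (-y / (t + ε) ^ 2)) t := by
  have h1 : HasDerivAt (fun s => G (y / (s + ε))) (deriv G (y / (t + ε)) * (-y / (t + ε) ^ 2)) t := by
    have d1 : HasDerivAt (fun s : ℝ => y / (s + ε)) (-y / (t + ε) ^ 2) t :=
      HasDerivAt.comp_add_const t ε (hasDerivAt_div_self_var (by positivity))
    exact HasDerivAt.comp t ((hG.differentiable one_ne_zero) _).hasDerivAt d1
  refine h1.congr_of_eventuallyEq ?_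
  filter_upwards [Ioi_mem_nhds ht] with s hs
  rw [shiftTime_of_nonneg hε (le_of_lt hs)]

lemma hasDerivAt_selfsim_x {G : ℝ → ℝ} (hG : ContDiff ℝ 1 G) {ε t : ℝ} (hε : 0 < ε)
    (ht : 0 < t) (y : ℝ) :
    HasDerivAt (fun y => G (y / shiftTime ε t))
    (deriv G (y / (t + ε)) * (1 / (t + ε))) y := by
  rw [shiftTime_of_nonneg hε ht.le]
  exact HasDerivAt.comp y ((hG.differentiable one_ne_zero) _).hasDerivAt
    ((hasDerivAt_id y).div_const _)

/-- The positive part of `ρ` solves the same problem, so `ρ ≥ 0` may be assumed everywhere. -/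
lemma IsAdmissibleWeakSol.posPart {T a : ℝ} {p : ℝ → ℝ} {ρL ρR u1L u1R : ℝ}
    {ρ : ℝ → ℝ × ℝ → ℝ} {u : ℝ → ℝ × ℝ → ℝ × ℝ}
    (h : IsAdmissibleWeakSol T a p ρL ρR u1L u1R ρ u) :
    IsAdmissibleWeakSol T a p ρL ρR u1L u1R (fun t x => max (ρ t x) 0) u := by
  have hn : ∀ᵐ t, t ∈ Ioo 0 T → ∀ᵐ x ∂(volume.restrict (Dom a)), max (ρ t x) 0 = ρ t x := by
    have h1 := h.nonneg
    rw [Measure.volume_eq_prod, ← Measure.prod_restrict] at h1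
    have := Measure.ae_ae_of_ae_prod h1
    rw [ae_restrict_iff' measurableSet_Ioo] at this
    filter_upwards [this] with t ht hm
    filter_upwards [ht hm] with x hx using max_eq_left hx
  have hn' : ∀ᵐ t ∂(volume.restrict (Ioo 0 T)),
      ∀ᵐ x ∂(volume.restrict (Dom a)), max (ρ t x) 0 = ρ t x := by
    rwa [ae_restrict_iff' measurableSet_Ioo]
  have hintegral : ∀ τ ∈ Ioo 0 T, ∀ f : ℝ → ℝ × ℝ → ℝ → ℝ,
      ∫ t in (0:ℝ)..τ, ∫ x in Dom a, f t x (max (ρ t x) 0) =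
      ∫ t in (0:ℝ)..τ, ∫ x in Dom a, f t x (ρ t x) := fun τ hτ f => by
    apply intervalIntegral.integral_congr_ae
    filter_upwards [hn] with t ht hm
    rw [uIoc_of_le hτ.1.le] at hm
    apply integral_congr_ae
    filter_upwards [ht ⟨hm.1, hm.2.trans_lt hτ.2⟩] with x hx
    rw [hx]
  refine ⟨?_, h.meas_u, ?_, Eventually.of_forall fun z => le_max_right _ _, ?_, ?_, ?_⟩
  · exact Measurable.max h.meas_ρ measurable_const
  · obtain ⟨C, hC⟩ := h.bdd
    refine ⟨C, fun t x => ⟨?_, (hC t x).2⟩⟩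
    rw [abs_of_nonneg (le_max_right _ _)]
    exact max_le ((le_abs_self _).trans (hC t x).1) ((abs_nonneg _).trans (hC t x).1)
  · filter_upwards [h.w1, hn', ae_restrict_mem measurableSet_Ioo] with τ h1 h2 h3 φ hφ
    rw [hintegral τ h3 fun t x r => r * pdt φ t x
          + r * ((u t x).1 * pd1 (φ t) x + (u t x).2 * pd2 (φ t) x), ← h1 φ hφ]
    congr 1
    apply integral_congr_ae
    filter_upwards [h2] with x hx
    rw [hx]
  · filter_upwards [h.w2, hn', ae_restrict_mem measurableSet_Ioo] with τ h1 h2 h3 φ hφ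
    rw [hintegral τ h3 fun t x r => r * dot (u t x) (deriv (fun τ' => φ τ' x) t)
          + r * ((u t x).1 * (u t x).1 * pd1 (fun y => (φ t y).1) x
            + (u t x).2 * (u t x).1 * pd2 (fun y => (φ t y).1) x
            + (u t x).1 * (u t x).2 * pd1 (fun y => (φ t y).2) x
            + (u t x).2 * (u t x).2 * pd2 (fun y => (φ t y).2) x)
          + p r * (pd1 (fun y => (φ t y).1) x + pd2 (fun y => (φ t y).2) x), ← h1 φ hφ]
    congr 2
    apply integral_congr_ae
    filter_upwards [h2] with x hx
    rw [hx]
  · filter_upwards [h.w3, hn'] with τ h1 h2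
    convert h1 using 3
    apply integral_congr_ae
    filter_upwards [h2] with x hx
    rw [hx]

section ids
variable {T a : ℝ} {p : ℝ → ℝ} {ρL ρR u1L u1R : ℝ} {ρ : ℝ → ℝ × ℝ → ℝ} {u : ℝ → ℝ × ℝ → ℝ × ℝ}

/-- The equation of continuity tested with `G(x₁/(t+ε))`. -/
lemma w1_selfsim {τ ε : ℝ} (hτ : 0 < τ) (hε : 0 < ε)
    (h : ∀ φ : ℝ → ℝ × ℝ → ℝ, IsTest φ →
      (∫ x in Dom a, (ρ τ x * φ τ x - riem ρL ρR x * φ 0 x)) +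
        (∫ t in (0:ℝ)..τ, ∫ s in (0:ℝ)..1,
          (ρR * u1R * φ t (a, s) - ρL * u1L * φ t (-a, s)))
      = ∫ t in (0:ℝ)..τ, ∫ x in Dom a,
          (ρ t x * pdt φ t x
            + ρ t x * ((u t x).1 * pd1 (φ t) x + (u t x).2 * pd2 (φ t) x)))
    (G : ℝ → ℝ) (hG : ContDiff ℝ 1 G) :
    (∫ x in Dom a, (ρ τ x * G (x.1 / (τ + ε)) - riem ρL ρR x * G (x.1 / ε))) +
        (∫ t in (0:ℝ)..τ, (ρR * u1R * G (a / (t + ε)) - ρL * u1L * G (-a / (t + ε)))) =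
      ∫ t in (0:ℝ)..τ, ∫ x in Dom a,
        (ρ t x * ((u t x).1 / (t + ε) - x.1 / (t + ε) ^ 2)) * deriv G (x.1 / (t + ε)) := by
  have h1 := h (fun t x => G (x.1 / shiftTime ε t)) ⟨contDiff_selfsim hG hε, fun _ _ _ => rfl⟩
  simp only [shiftTime_of_nonneg hε hτ.le, shiftTime_of_nonneg hε le_rfl, zero_add] at h1
  convert h1 using 1
  · congr 1
    refine intervalIntegral.integral_congr fun t ht => ?_
    rw [uIcc_of_le hτ.le] at ht
    simp only [shiftTime_of_nonneg hε ht.1, intervalIntegral.integral_const]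
    simp
  · refine intervalIntegral.integral_congr_Ioo_of_le hτ.le fun t ht => ?_
    refine integral_congr_ae (Eventually.of_forall fun x => ?_)
    simp only [pdt, pd1, pd2, (hasDerivAt_selfsim_t hG hε ht.1 x.1).deriv,
      (hasDerivAt_selfsim_x hG hε ht.1 x.1).deriv, deriv_const]
    ring

/-- The momentum equation tested with `(G(x₁/(t+ε)), 0)`. -/
lemma w2_selfsim {τ ε : ℝ} (hτ : 0 < τ) (hε : 0 < ε)
    (h : ∀ φ : ℝ → ℝ × ℝ → ℝ × ℝ, IsTestV φ →
      (∫ x in Dom a, (ρ τ x * dot (u τ x) (φ τ x)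
          - riem ρL ρR x * dot (riem u1L u1R x, 0) (φ 0 x))) +
        (∫ t in (0:ℝ)..τ, ∫ s in (0:ℝ)..1,
          (ρR * u1R * dot (u1R, 0) (φ t (a, s)) - ρL * u1L * dot (u1L, 0) (φ t (-a, s)))) +
        (∫ t in (0:ℝ)..τ, ∫ s in (0:ℝ)..1,
          (p ρR * (φ t (a, s)).1 - p ρL * (φ t (-a, s)).1))
      = ∫ t in (0:ℝ)..τ, ∫ x in Dom a,
          (ρ t x * dot (u t x) (deriv (fun τ' => φ τ' x) t)
            + ρ t x * ((u t x).1 * (u t x).1 * pd1 (fun y => (φ t y).1) x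
              + (u t x).2 * (u t x).1 * pd2 (fun y => (φ t y).1) x
              + (u t x).1 * (u t x).2 * pd1 (fun y => (φ t y).2) x
              + (u t x).2 * (u t x).2 * pd2 (fun y => (φ t y).2) x)
            + p (ρ t x) * (pd1 (fun y => (φ t y).1) x + pd2 (fun y => (φ t y).2) x)))
    (G : ℝ → ℝ) (hG : ContDiff ℝ 1 G) :
    (∫ x in Dom a, (ρ τ x * (u τ x).1 * G (x.1 / (τ + ε))
        - riem ρL ρR x * riem u1L u1R x * G (x.1 / ε))) +
        (∫ t in (0:ℝ)..τ, ((ρR * u1R ^ 2 + p ρR) * G (a / (t + ε))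
          - (ρL * u1L ^ 2 + p ρL) * G (-a / (t + ε)))) =
      ∫ t in (0:ℝ)..τ, ∫ x in Dom a,
        ((ρ t x * (u t x).1 ^ 2 + p (ρ t x)) / (t + ε) - ρ t x * (u t x).1 * x.1 / (t + ε) ^ 2) *
          deriv G (x.1 / (t + ε)) := by
  have h1 := h (fun t x => (G (x.1 / shiftTime ε t), 0))
    ⟨(contDiff_selfsim hG hε).prodMk contDiff_const, fun _ _ _ => rfl⟩
  simp only [shiftTime_of_nonneg hε hτ.le, shiftTime_of_nonneg hε le_rfl, zero_add, dot,
    mul_zero, add_zero, intervalIntegral.integral_const, sub_zero, one_smul] at h1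
  convert h1 using 1
  · rw [add_assoc]
    congr 1
    · refine integral_congr_ae (Eventually.of_forall fun x => ?_)
      ring
    · have c1 := cont_time hG.continuous hτ.le hε a
      have c2 := cont_time hG.continuous hτ.le hε (-a)
      have e : ∀ k : ℝ → ℝ → ℝ, ∫ t in (0:ℝ)..τ, k (G (a / shiftTime ε t)) (G (-a / shiftTime ε t))
          = ∫ t in (0:ℝ)..τ, k (G (a / (t + ε))) (G (-a / (t + ε))) := fun k => by
        refine intervalIntegral.integral_congr fun t ht => ?_
        rw [uIcc_of_le hτ.le] at ht
        simp only [shiftTime_of_nonneg hε ht.1]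
      rw [e fun y z => ρR * u1R * (u1R * y) - ρL * u1L * (u1L * z),
        e fun y z => p ρR * y - p ρL * z, ← intervalIntegral.integral_add]
      · congr 1; ext t; ring
      · exact ((continuousOn_const.mul (continuousOn_const.mul c1)).sub
          (continuousOn_const.mul (continuousOn_const.mul c2))).intervalIntegrable
      · exact ((continuousOn_const.mul c1).sub (continuousOn_const.mul c2)).intervalIntegrable
  · refine intervalIntegral.integral_congr_Ioo_of_le hτ.le fun t ht => ?_
    refine integral_congr_ae (Eventually.of_forall fun x => ?_)
    have d : deriv (fun τ' => ((G (x.1 / shiftTime ε τ'), 0) : ℝ × ℝ)) t =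
        (deriv G (x.1 / (t + ε)) * (-x.1 / (t + ε) ^ 2), 0) :=
      ((hasDerivAt_selfsim_t hG hε ht.1 x.1).prodMk (hasDerivAt_const t (0:ℝ))).deriv
    simp only [d, pd1, pd2, (hasDerivAt_selfsim_x hG hε ht.1 x.1).deriv, deriv_const]
    ring

/-- The transport identity for functions of `x₁/(t+ε)`, from the fundamental theorem of calculus in
time. -/
lemma transport_selfsim {τ ε : ℝ} (hτ : 0 < τ) (hε : 0 < ε) (G : ℝ → ℝ) (hG : ContDiff ℝ 1 G) :
    (∫ x in Dom a, (1 * G (x.1 / (τ + ε)) - 1 * G (x.1 / ε))) +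
        (∫ t in (0:ℝ)..τ, (0 * G (a / (t + ε)) - 0 * G (-a / (t + ε)))) =
      ∫ t in (0:ℝ)..τ, ∫ x in Dom a, (-x.1 / (t + ε) ^ 2) * deriv G (x.1 / (t + ε)) := by
  simp only [zero_mul, sub_zero, intervalIntegral.integral_zero, add_zero, one_mul]
  have hG' : Continuous (deriv G) := hG.continuous_deriv le_rfl
  have ftc : ∀ y : ℝ, G (y / (τ + ε)) - G (y / ε) =
      ∫ t in (0:ℝ)..τ, (-y / (t + ε) ^ 2) * deriv G (y / (t + ε)) := fun y => by
    rw [intervalIntegral.integral_eq_sub_of_hasDerivAt (f := fun t => G (y / (t + ε)))]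
    · simp
    · intro t ht
      rw [uIcc_of_le hτ.le] at ht
      have d1 : HasDerivAt (fun s : ℝ => y / (s + ε)) (-y / (t + ε) ^ 2) t :=
        HasDerivAt.comp_add_const t ε (hasDerivAt_div_self_var (by linarith [ht.1]))
      exact (HasDerivAt.comp t ((hG.differentiable one_ne_zero) _).hasDerivAt d1).congr_deriv
        (by ring)
    · refine ContinuousOn.intervalIntegrable (ContinuousOn.mul ?_ (cont_time hG' hτ.le hε y))
      rw [uIcc_of_le hτ.le]
      exact continuousOn_const.div (by fun_prop) fun t ht => by have := ht.1; positivity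
  simp only [ftc, intervalIntegral.integral_of_le hτ.le]
  rw [integral_integral_swap]
  have hm : Measurable (fun z : (ℝ × ℝ) × ℝ =>
      (-z.1.1 / (z.2 + ε) ^ 2) * deriv G (z.1.1 / (z.2 + ε))) := by
    have := hG'.measurable
    fun_prop
  obtain ⟨B, hB⟩ := (isCompact_Icc (a := -(a / ε)) (b := a / ε)).exists_bound_of_continuousOn
    hG'.continuousOn
  refine integrable_of_bdd hm.aestronglyMeasurable (C := a / ε ^ 2 * B) ?_
  rw [Measure.prod_restrict, ae_restrict_iff' ((measurableSet_Dom a).prod measurableSet_Ioc)]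
  refine Eventually.of_forall fun z hz => ?_
  have hx := hz.1.1
  have ht := hz.2.1
  have ha : |z.1.1| ≤ a := abs_le.2 ⟨hx.1.le, hx.2.le⟩
  have ha0 : 0 ≤ a := (abs_nonneg _).trans ha
  have hs : ε ≤ z.2 + ε := by linarith
  have hs0 : 0 < z.2 + ε := by linarith
  change |(-z.1.1 / (z.2 + ε) ^ 2) * deriv G (z.1.1 / (z.2 + ε))| ≤ _
  rw [abs_mul, abs_div, abs_neg, abs_of_pos (by positivity : 0 < (z.2 + ε) ^ 2)]
  refine mul_le_mul ?_ ?_ (abs_nonneg _) (by positivity)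
  · exact div_le_div₀ ha0 ha (by positivity) (by gcongr)
  · refine hB _ (abs_le.1 ?_)
    rw [abs_div, abs_of_pos hs0]
    exact div_le_div₀ ha0 ha hε hs

end ids

/-! ### Integrability and the source term -/

/-- Measurable functions that are bounded on `s`. -/
structure BM {α : Type*} [MeasurableSpace α] (s : Set α) (f : α → ℝ) : Prop where
  meas : Measurable f
  bdd : ∃ C, ∀ x ∈ s, |f x| ≤ C

namespace BM
variable {α : Type*} [MeasurableSpace α] {s : Set α} {f g : α → ℝ}

lemma const (c : ℝ) : BM s fun _ => c := ⟨measurable_const, |c|, fun _ _ => le_rfl⟩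

lemma add (hf : BM s f) (hg : BM s g) : BM s fun x => f x + g x := by
  obtain ⟨A, hA⟩ := hf.bdd
  obtain ⟨B, hB⟩ := hg.bdd
  exact ⟨hf.meas.add hg.meas, A + B, fun x hx =>
    (abs_add_le _ _).trans (add_le_add (hA x hx) (hB x hx))⟩

lemma mul (hf : BM s f) (hg : BM s g) : BM s fun x => f x * g x := by
  obtain ⟨A, hA⟩ := hf.bdd
  obtain ⟨B, hB⟩ := hg.bdd
  refine ⟨hf.meas.mul hg.meas, A * B, fun x hx => ?_⟩
  rw [abs_mul]
  exact mul_le_mul (hA x hx) (hB x hx) (abs_nonneg _) ((abs_nonneg _).trans (hA x hx))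

lemma neg (hf : BM s f) : BM s fun x => -f x := by
  obtain ⟨A, hA⟩ := hf.bdd
  exact ⟨hf.meas.neg, A, fun x hx => by rw [abs_neg]; exact hA x hx⟩

lemma sub (hf : BM s f) (hg : BM s g) : BM s fun x => f x - g x := by
  simpa only [sub_eq_add_neg] using hf.add hg.neg

lemma sq (hf : BM s f) : BM s fun x => f x ^ 2 := by simpa only [_root_.sq] using hf.mul hf

lemma integrable {μ : Measure α} [IsFiniteMeasure (μ.restrict s)] (hs : MeasurableSet s)
    (hf : BM s f) : Integrable f (μ.restrict s) := by
  obtain ⟨A, hA⟩ := hf.bdd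
  exact integrable_of_bdd hf.meas.aestronglyMeasurable (ae_restrict_of_forall_mem hs hA)

end BM

/-- Time integrability of slice integrals. -/
lemma slice_integrable {a τ : ℝ} {F : ℝ × (ℝ × ℝ) → ℝ} (hτ : 0 ≤ τ)
    (hF : BM (Ioc 0 τ ×ˢ Dom a) F) :
    (∀ t ∈ Ioc 0 τ, Integrable (fun x => F (t, x)) (volume.restrict (Dom a))) ∧
      IntervalIntegrable (fun t => ∫ x in Dom a, F (t, x)) volume 0 τ := by
  have hi : Integrable F ((volume.restrict (Ioc 0 τ)).prod (volume.restrict (Dom a))) := by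
    rw [Measure.prod_restrict]
    have : IsFiniteMeasure (((volume : Measure ℝ).prod (volume : Measure (ℝ × ℝ))).restrict
        (Ioc 0 τ ×ˢ Dom a)) := by
      rw [← Measure.prod_restrict]; infer_instance
    exact hF.integrable (measurableSet_Ioc.prod (measurableSet_Dom a))
  obtain ⟨C, hC⟩ := hF.bdd
  refine ⟨fun t ht => integrable_of_bdd (C := C) ?_ ?_, ?_⟩
  · exact (hF.meas.comp measurable_prodMk_left).aestronglyMeasurable
  · exact ae_restrict_of_forall_mem (measurableSet_Dom a) fun x hx => hC _ ⟨ht, hx⟩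
  · rw [intervalIntegrable_iff, uIoc_of_le hτ]
    exact hi.integral_prod_left

/-- The relative energy balance has a nonpositive source: the integrand is `-U'/s` times
`r (w - U)² + p(r) - p(R) - p'(R) (r - R)`. -/
lemma source_nonpos {p R U : ℝ → ℝ} (hp : PressureOK p) (h : Profile p R U) {ξ : ℝ}
    (ho : DifferentiableAt ℝ R ξ ∧ DifferentiableAt ℝ U ξ ∧
      (U ξ - ξ) * deriv R ξ + R ξ * deriv U ξ = 0 ∧
      R ξ * (U ξ - ξ) * deriv U ξ + deriv p (R ξ) * deriv R ξ = 0)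
    {r w s x : ℝ} (hr : 0 ≤ r) (hs : 0 < s) (hx : ξ = x / s) :
    r * (w / s - x / s ^ 2) * deriv (fun ξ => 1 / 2 * (U ξ * U ξ) - Hder p (R ξ)) ξ
      - ((r * w ^ 2 + p r) / s - r * w * x / s ^ 2) * deriv U ξ
      + (-x / s ^ 2) * deriv (fun ξ => p (R ξ)) ξ
      + 1 / s * deriv (fun ξ => p (R ξ) * U ξ) ξ ≤ 0 := by
  obtain ⟨hR, hU, e1, e2⟩ := ho
  have hpos := h.pos ξ
  have dP : HasDerivAt (fun ξ => p (R ξ)) (deriv p (R ξ) * deriv R ξ) ξ :=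
    HasDerivAt.comp ξ (hp.hasDerivAt hpos) hR.hasDerivAt
  have dH : HasDerivAt (fun ξ => Hder p (R ξ)) (deriv p (R ξ) / R ξ * deriv R ξ) ξ :=
    HasDerivAt.comp ξ (hp.hasDerivAt_Hder hpos) hR.hasDerivAt
  have dG := ((hU.hasDerivAt.fun_mul hU.hasDerivAt).const_mul (1 / 2)).fun_sub dH
  rw [dG.deriv, (dP.fun_mul hU.hasDerivAt).deriv, dP.deriv]
  have hU' : 0 ≤ deriv U ξ := h.monoU.deriv_nonneg
  have htan := hp.tangent hr hpos
  have hx' : x = ξ * s := by rw [hx]; field_simp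
  set u' := deriv U ξ
  set v := U ξ - ξ with hv
  have e3 : deriv p (R ξ) * deriv R ξ = -(R ξ * v * u') := by linarith
  have e4 : deriv p (R ξ) / R ξ * deriv R ξ = -(v * u') := by
    rw [div_mul_eq_mul_div, e3]; field_simp
  have e5 : v ^ 2 * u' = deriv p (R ξ) * u' := by
    have : R ξ * (v ^ 2 * u' - deriv p (R ξ) * u') = 0 := by
      linear_combination v * e2 - deriv p (R ξ) * e1
    rcases mul_eq_zero.1 this with h | h
    · exact absurd h hpos.ne'
    · linarith
  rw [e4, e3, hx']
  have key : r * (w / s - ξ * s / s ^ 2) * (1 / 2 * (u' * U ξ + U ξ * u') - -(v * u'))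
      - ((r * w ^ 2 + p r) / s - r * w * (ξ * s) / s ^ 2) * u'
      + (-(ξ * s) / s ^ 2) * (-(R ξ * v * u'))
      + 1 / s * (-(R ξ * v * u') * U ξ + p (R ξ) * u') =
      -(u' * (r * (w - U ξ) ^ 2 + (p r - (p (R ξ) + deriv p (R ξ) * (r - R ξ))))) / s := by
    rw [eq_div_iff hs.ne']
    have hs' := hs.ne'
    field_simp
    rw [hv] at e5 ⊢
    linear_combination 2 * (r - R ξ) * e5
  rw [key]
  apply div_nonpos_of_nonpos_of_nonneg _ hs.le
  rw [neg_nonpos]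
  exact mul_nonneg hU' (add_nonneg (by positivity) (by linarith))

/-! ### The relative energy inequality -/

/-- Relative energy of the two-dimensional state `(r,w)` with respect to `(s,(v,0))`. -/
noncomputable def relE2 (p : ℝ → ℝ) (r : ℝ) (w : ℝ × ℝ) (s v : ℝ) : ℝ :=
  1 / 2 * r * w.2 ^ 2 + relE p r w.1 s v

lemma measurable_riem (L R : ℝ) : Measurable (riem L R) := by
  unfold riem
  exact Measurable.ite (measurableSet_le measurable_fst measurable_const) measurable_const
    measurable_const

lemma riem_cases {P : ℝ → ℝ → Prop} {ρL ρR u1L u1R : ℝ} (hL : P ρL u1L) (hR : P ρR u1R)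
    (x : ℝ × ℝ) : P (riem ρL ρR x) (riem u1L u1R x) := by
  unfold riem
  split_ifs <;> assumption

lemma bm_riem (s : Set (ℝ × ℝ)) (L R : ℝ) : BM s (riem L R) := by
  refine ⟨measurable_riem L R, max |L| |R|, fun x _ => ?_⟩
  unfold riem
  split_ifs <;> simp

/-- The balance of relative energy between the weak solution and the fan shifted by `ε` in time.
The shift makes the fan a Lipschitz function up to `t = 0`. -/
lemma relE_step {a : ℝ} {p : ℝ → ℝ} {ρL ρR u1L u1R : ℝ} {ρ : ℝ → ℝ × ℝ → ℝ}
    {u : ℝ → ℝ × ℝ → ℝ × ℝ} {R U : ℝ → ℝ} (ha : 0 < a) (hp : PressureOK p) (hρL : 0 < ρL)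
    (hρR : 0 < ρR) (h : Profile p R U) {M C : ℝ} (hr : ∀ ξ, M ≤ ξ → R ξ = ρR ∧ U ξ = u1R)
    (hl : ∀ ξ, ξ ≤ -M → R ξ = ρL ∧ U ξ = u1L) (hC : ∀ ξ, R ξ ≤ C ∧ |U ξ| ≤ C)
    (hρ : ∀ t x, 0 ≤ ρ t x) (mρ : Measurable (Function.uncurry ρ))
    (mu : Measurable (Function.uncurry u)) {C' : ℝ} (hb : ∀ t x, |ρ t x| ≤ C' ∧ ‖u t x‖ ≤ C')
    {τ ε : ℝ} (hτ : 0 < τ) (hε : 0 < ε)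
    (h1 : ∀ G : ℝ → ℝ, ContDiff ℝ 1 G →
      (∫ x in Dom a, (ρ τ x * G (x.1 / (τ + ε)) - riem ρL ρR x * G (x.1 / ε))) +
        (∫ t in (0:ℝ)..τ, (ρR * u1R * G (a / (t + ε)) - ρL * u1L * G (-a / (t + ε)))) =
      ∫ t in (0:ℝ)..τ, ∫ x in Dom a,
        (ρ t x * ((u t x).1 / (t + ε) - x.1 / (t + ε) ^ 2)) * deriv G (x.1 / (t + ε)))
    (h2 : ∀ G : ℝ → ℝ, ContDiff ℝ 1 G →
      (∫ x in Dom a, (ρ τ x * (u τ x).1 * G (x.1 / (τ + ε))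
        - riem ρL ρR x * riem u1L u1R x * G (x.1 / ε))) +
        (∫ t in (0:ℝ)..τ, ((ρR * u1R ^ 2 + p ρR) * G (a / (t + ε))
          - (ρL * u1L ^ 2 + p ρL) * G (-a / (t + ε)))) =
      ∫ t in (0:ℝ)..τ, ∫ x in Dom a,
        ((ρ t x * (u t x).1 ^ 2 + p (ρ t x)) / (t + ε) - ρ t x * (u t x).1 * x.1 / (t + ε) ^ 2) *
          deriv G (x.1 / (t + ε)))
    (h3 : (∫ x in Dom a, (1 / 2 * ρ τ x * dot (u τ x) (u τ x) + Hfun p (ρ τ x))) -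
      (∫ x in Dom a, (1 / 2 * riem ρL ρR x * (riem u1L u1R x) ^ 2
        + Hfun p (riem ρL ρR x))) +
      (∫ _t in (0:ℝ)..τ, ∫ _s in (0:ℝ)..1,
        ((1 / 2 * ρR * u1R ^ 2 + Hfun p ρR + p ρR) * u1R
          - (1 / 2 * ρL * u1L ^ 2 + Hfun p ρL + p ρL) * u1L)) ≤ 0) :
    ∫ x in Dom a, relE2 p (ρ τ x) (u τ x) (R (x.1 / (τ + ε))) (U (x.1 / (τ + ε))) ≤
      ∫ x in Dom a, relE p (riem ρL ρR x) (riem u1L u1R x) (R (x.1 / ε)) (U (x.1 / ε)) := by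
  obtain ⟨KU, hKU⟩ := h.lipU
  obtain ⟨KR, hKR⟩ := h.lipR
  obtain ⟨KP, hKP⟩ := h.lip_p hp fun ξ => (hC ξ).1
  obtain ⟨KH, hKH⟩ := h.lip_Hder hp fun ξ => (hC ξ).1
  obtain ⟨c, hc, hcR⟩ := h.lower
  -- boundedness of the profiles
  have bU : ∀ ξ, |U ξ| ≤ C := fun ξ => (hC ξ).2
  have bP : ∀ ξ, |p (R ξ)| ≤ p C := fun ξ => hp.bdd_p (h.pos ξ).le (hC ξ).1
  obtain ⟨CH, bH⟩ : ∃ CH, ∀ ξ, |Hder p (R ξ)| ≤ CH := by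
    have hcont : ContinuousOn (Hder p) (Icc c C) := fun r hr =>
      (hp.hasDerivAt_Hder (hc.trans_le hr.1)).continuousAt.continuousWithinAt
    obtain ⟨B, hB⟩ := isCompact_Icc.exists_bound_of_continuousOn hcont
    exact ⟨B, fun ξ => hB _ ⟨hcR ξ, (hC ξ).1⟩⟩
  obtain ⟨KU2, hKU2⟩ := mul_lip hKU hKU bU bU
  obtain ⟨KPU, hKPU⟩ := mul_lip hKP hKU bP bU
  set G : ℝ → ℝ := fun ξ => 1 / 2 * (U ξ * U ξ) - Hder p (R ξ) with hG
  obtain ⟨KG, hKG⟩ : ∃ K, LipschitzWith K G := by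
    have bU2 : ∀ ξ, |U ξ * U ξ| ≤ C * C := fun ξ => by
      rw [abs_mul]
      exact mul_le_mul (bU ξ) (bU ξ) (abs_nonneg _) ((abs_nonneg _).trans (bU ξ))
    obtain ⟨K, hK⟩ := mul_lip (LipschitzWith.const (1 / 2 : ℝ)) hKU2 (fun _ => le_rfl) bU2
    exact ⟨_, hK.sub hKH⟩
  have bG : ∀ ξ, |G ξ| ≤ 1 / 2 * (C * C) + CH := fun ξ => by
    refine (abs_sub _ _).trans (add_le_add ?_ (bH ξ))
    rw [abs_mul, abs_mul, abs_of_pos (by norm_num : (0:ℝ) < 1 / 2)]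
    gcongr
    · exact (abs_nonneg _).trans (bU ξ)
    · exact bU ξ
    · exact bU ξ
  -- measurability and boundedness of the weak solution
  set S : Set (ℝ × (ℝ × ℝ)) := Ioc 0 τ ×ˢ Dom a with hS
  have Bρ : BM S fun z => ρ z.1 z.2 := ⟨mρ, C', fun z _ => (hb z.1 z.2).1⟩
  have Bu : BM S fun z => (u z.1 z.2).1 :=
    ⟨mu.fst, C', fun z _ => (norm_fst_le _).trans (hb z.1 z.2).2⟩
  have Bp : BM S fun z => p (ρ z.1 z.2) := ⟨hp.measurable_p mρ fun z => hρ _ _, p C', fun z _ =>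
    hp.bdd_p (hρ _ _) ((le_abs_self _).trans (hb z.1 z.2).1)⟩
  have Bs : BM S fun z => (z.1 + ε)⁻¹ := ⟨by fun_prop, ε⁻¹, fun z hz => by
    have : 0 < z.1 := hz.1.1
    rw [abs_of_pos (by positivity)]
    gcongr; linarith⟩
  have Bx : BM S fun z => z.2.1 := ⟨by fun_prop, a, fun z hz =>
    abs_le.2 ⟨hz.2.1.1.le, hz.2.1.2.le⟩⟩
  set k1 : ℝ → ℝ × ℝ → ℝ := fun t x => ρ t x * ((u t x).1 / (t + ε) - x.1 / (t + ε) ^ 2) with hk1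
  set k2 : ℝ → ℝ × ℝ → ℝ := fun t x =>
    (ρ t x * (u t x).1 ^ 2 + p (ρ t x)) / (t + ε) - ρ t x * (u t x).1 * x.1 / (t + ε) ^ 2 with hk2
  set k0 : ℝ → ℝ × ℝ → ℝ := fun t x => -x.1 / (t + ε) ^ 2 with hk0
  set k3 : ℝ → ℝ × ℝ → ℝ := fun t x => 1 / (t + ε) with hk3
  have Bk1 : BM S (Function.uncurry k1) := by
    have := Bρ.mul ((Bu.mul Bs).sub (Bx.mul Bs.sq))
    simpa only [hk1, Function.uncurry_def, div_eq_mul_inv, inv_pow] using this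
  have Bk2 : BM S (Function.uncurry k2) := by
    have := (((Bρ.mul Bu.sq).add Bp).mul Bs).sub (((Bρ.mul Bu).mul Bx).mul Bs.sq)
    simpa only [hk2, Function.uncurry_def, div_eq_mul_inv, inv_pow] using this
  have Bk0 : BM S (Function.uncurry k0) := by
    have := Bx.neg.mul Bs.sq
    simpa only [hk0, Function.uncurry_def, div_eq_mul_inv, inv_pow] using this
  have Bk3 : BM S (Function.uncurry k3) := by
    simpa only [hk3, Function.uncurry_def, one_div] using Bs
  have kb : ∀ {k : ℝ → ℝ × ℝ → ℝ}, BM S (Function.uncurry k) →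
      ∃ Ck, ∀ t ∈ Ioc 0 τ, ∀ x ∈ Dom a, |k t x| ≤ Ck := fun hk => by
    obtain ⟨Ck, hCk⟩ := hk.bdd
    exact ⟨Ck, fun t ht x hx => hCk (t, x) ⟨ht, hx⟩⟩
  have Bd : ∀ {F : ℝ → ℝ} {K : ℝ≥0}, LipschitzWith K F →
      BM S (fun z => deriv F (z.2.1 / (z.1 + ε))) := fun {F K} hF =>
    ⟨(measurable_deriv F).comp (by fun_prop), K, fun z _ => norm_deriv_le_of_lipschitz hF⟩
  have Bτρ : BM univ fun x => ρ τ x := ⟨mρ.comp measurable_prodMk_left, C', fun x _ => (hb τ x).1⟩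
  have Bτu : BM univ fun x => (u τ x).1 := ⟨(mu.comp measurable_prodMk_left).fst, C', fun x _ =>
    (norm_fst_le _).trans (hb τ x).2⟩
  have Bτu2 : BM univ fun x => (u τ x).2 := ⟨(mu.comp measurable_prodMk_left).snd, C', fun x _ =>
    (norm_snd_le _).trans (hb τ x).2⟩
  have BτH : BM univ fun x => Hfun p (ρ τ x) := by
    obtain ⟨B, hB⟩ := hp.bdd_Hfun C'
    exact ⟨hp.measurable_Hfun Bτρ.meas (hρ τ), B, fun x _ =>
      hB _ (hρ τ x) ((le_abs_self _).trans (hb τ x).1)⟩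
  have B0ρ := bm_riem univ ρL ρR
  have B0u := bm_riem univ u1L u1R
  have B0H : BM univ fun x => Hfun p (riem ρL ρR x) := by
    have e : (fun x => Hfun p (riem ρL ρR x)) = riem (Hfun p ρL) (Hfun p ρR) := by
      ext x; unfold riem; split_ifs <;> rfl
    rw [e]; exact bm_riem _ _ _
  have BF : ∀ {F : ℝ → ℝ} {B : ℝ}, Measurable F → (∀ ξ, |F ξ| ≤ B) → ∀ s : ℝ,
      BM univ (fun x : ℝ × ℝ => F (x.1 / s)) := fun hF hB s =>
    ⟨hF.comp (by fun_prop), _, fun x _ => hB _⟩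
  have ext : ∀ {k : ℝ → ℝ × ℝ → ℝ} (hk : BM S (Function.uncurry k)) {A A₀ : ℝ × ℝ → ℝ}
      (hA : BM univ A) (hA₀ : BM univ A₀) {c₁ c₂ : ℝ}
      (hid : ∀ G : ℝ → ℝ, ContDiff ℝ 1 G →
        (∫ x in Dom a, (A x * G (x.1 / (τ + ε)) - A₀ x * G (x.1 / ε))) +
          (∫ t in (0:ℝ)..τ, (c₁ * G (a / (t + ε)) - c₂ * G (-a / (t + ε)))) =
        ∫ t in (0:ℝ)..τ, ∫ x in Dom a, k t x * deriv G (x.1 / (t + ε)))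
      {F : ℝ → ℝ} {K : ℝ≥0} (hF : LipschitzWith K F) {B : ℝ} (hB : ∀ x, |F x| ≤ B),
      (∫ x in Dom a, (A x * F (x.1 / (τ + ε)) - A₀ x * F (x.1 / ε))) +
        (∫ t in (0:ℝ)..τ, (c₁ * F (a / (t + ε)) - c₂ * F (-a / (t + ε)))) =
      ∫ t in (0:ℝ)..τ, ∫ x in Dom a, k t x * deriv F (x.1 / (t + ε)) := by
    intro k hk A A₀ hA hA₀ c₁ c₂ hid F K hF B hB
    obtain ⟨Ck, hCk⟩ := kb hk
    obtain ⟨C1, hC1⟩ := hA.bdd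
    obtain ⟨C2, hC2⟩ := hA₀.bdd
    exact selfsim_extend hτ.le hε hk.meas hCk hA.meas hA₀.meas
      (fun x => (hC1 x (mem_univ x)).trans (le_max_left _ _))
      (fun x => (hC2 x (mem_univ x)).trans (le_max_right _ _)) hid hF hB
  have i1 := ext Bk1 Bτρ B0ρ h1 hKG bG
  have i2 := ext Bk2 (Bτρ.mul Bτu) (B0ρ.mul B0u) h2 hKU bU
  have i0 := ext Bk0 (BM.const 1) (BM.const 1) (transport_selfsim hτ hε) hKP bP
  -- the divergence of `p(R) U` integrates to its boundary values
  have i3 : ∀ t ∈ Ioc 0 τ, ∫ x in Dom a, k3 t x * deriv (fun ξ => p (R ξ) * U ξ) (x.1 / (t + ε)) =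
      p (R (a / (t + ε))) * U (a / (t + ε)) - p (R (-a / (t + ε))) * U (-a / (t + ε)) := by
    intro t ht
    have hs : t + ε ≠ 0 := by linarith [ht.1]
    rw [hk3, integral_Dom_fst ha.le
      (fun y => 1 / (t + ε) * deriv (fun ξ => p (R ξ) * U ξ) (y / (t + ε))),
      intervalIntegral.integral_const_mul, intervalIntegral.integral_comp_div _ hs, lip_ftc hKPU,
      smul_eq_mul, ← mul_assoc, one_div, inv_mul_cancel₀ hs, one_mul]
  have s1 := slice_integrable hτ.le (Bk1.mul (Bd hKG))
  have s2 := slice_integrable hτ.le (Bk2.mul (Bd hKU))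
  have s0 := slice_integrable hτ.le (Bk0.mul (Bd hKP))
  have s3 := slice_integrable hτ.le (Bk3.mul (Bd hKPU))
  simp only [Function.uncurry_apply_pair] at s1 s2 s0 s3
  set I1 : ℝ → ℝ := fun t => ∫ x in Dom a, k1 t x * deriv G (x.1 / (t + ε)) with hI1
  set I2 : ℝ → ℝ := fun t => ∫ x in Dom a, k2 t x * deriv U (x.1 / (t + ε)) with hI2
  set I0 : ℝ → ℝ := fun t => ∫ x in Dom a, k0 t x * deriv (fun ξ => p (R ξ)) (x.1 / (t + ε)) with hI0
  set I3 : ℝ → ℝ := fun t =>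
    ∫ x in Dom a, k3 t x * deriv (fun ξ => p (R ξ) * U ξ) (x.1 / (t + ε)) with hI3
  have src : ∀ t ∈ Ioc 0 τ, I1 t - I2 t + I0 t + I3 t ≤ 0 := by
    intro t ht
    have hs : 0 < t + ε := by linarith [ht.1]
    rw [← integral_sub' (s1.1 t ht) (s2.1 t ht),
      ← integral_add' ((s1.1 t ht).sub (s2.1 t ht)) (s0.1 t ht),
      ← integral_add' (((s1.1 t ht).sub (s2.1 t ht)).add (s0.1 t ht)) (s3.1 t ht)]
    apply integral_nonpos_of_ae
    filter_upwards [ae_fst_of_ae h.ode a hs.ne'] with x hx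
    exact source_nonpos hp h hx (hρ t x) hs rfl
  have srcInt : (∫ t in (0:ℝ)..τ, I1 t) - (∫ t in (0:ℝ)..τ, I2 t) + (∫ t in (0:ℝ)..τ, I0 t) +
      (∫ t in (0:ℝ)..τ, I3 t) ≤ 0 := by
    rw [← intervalIntegral.integral_sub s1.2 s2.2,
      ← intervalIntegral.integral_add (s1.2.sub s2.2) s0.2,
      ← intervalIntegral.integral_add ((s1.2.sub s2.2).add s0.2) s3.2,
      intervalIntegral.integral_of_le hτ.le]
    exact integral_nonpos_of_ae (ae_restrict_of_forall_mem measurableSet_Ioc src)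
  have e3 : ∫ t in (0:ℝ)..τ, I3 t = ∫ t in (0:ℝ)..τ, (p (R (a / (t + ε))) * U (a / (t + ε))
      - p (R (-a / (t + ε))) * U (-a / (t + ε))) := by
    apply intervalIntegral.integral_congr_ae
    filter_upwards with t ht
    rw [uIoc_of_le hτ.le] at ht
    exact i3 t ht
  rw [e3] at srcInt
  -- the boundary terms add up to the fluxes of relative energy, which have a sign
  have cU := fun b => cont_time hKU.continuous hτ.le hε b
  have cG := fun b => cont_time hKG.continuous hτ.le hε b
  have cP := fun b => cont_time hKP.continuous hτ.le hε b
  set b3 := ((1 / 2 * ρR * u1R ^ 2 + Hfun p ρR + p ρR) * u1R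
          - (1 / 2 * ρL * u1L ^ 2 + Hfun p ρL + p ρL) * u1L) with hb3
  set b1 : ℝ → ℝ := fun t => ρR * u1R * G (a / (t + ε)) - ρL * u1L * G (-a / (t + ε)) with hb1
  set b2 : ℝ → ℝ := fun t => (ρR * u1R ^ 2 + p ρR) * U (a / (t + ε))
          - (ρL * u1L ^ 2 + p ρL) * U (-a / (t + ε)) with hb2
  set b4 : ℝ → ℝ := fun t => p (R (a / (t + ε))) * U (a / (t + ε))
      - p (R (-a / (t + ε))) * U (-a / (t + ε)) with hb4
  have q1 : IntervalIntegrable b1 volume 0 τ :=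
    ((continuousOn_const.mul (cG a)).sub (continuousOn_const.mul (cG (-a)))).intervalIntegrable
  have q2 : IntervalIntegrable b2 volume 0 τ :=
    ((continuousOn_const.mul (cU a)).sub (continuousOn_const.mul (cU (-a)))).intervalIntegrable
  have q4 : IntervalIntegrable b4 volume 0 τ :=
    (((cP a).mul (cU a)).sub ((cP (-a)).mul (cU (-a)))).intervalIntegrable
  have bdry : 0 ≤ (∫ _t in (0:ℝ)..τ, b3) - (∫ t in (0:ℝ)..τ, b2 t) + (∫ t in (0:ℝ)..τ, b1 t)
      + ∫ t in (0:ℝ)..τ, b4 t := by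
    rw [← intervalIntegral.integral_sub intervalIntegrable_const q2,
      ← intervalIntegral.integral_add (intervalIntegrable_const.sub q2) q1,
      ← intervalIntegral.integral_add ((intervalIntegrable_const.sub q2).add q1) q4]
    refine intervalIntegral.integral_nonneg hτ.le fun t ht => ?_
    have hs : 0 < t + ε := by linarith [ht.1]
    have r1 := h.relQ_nonneg hp (fun ξ => (hC ξ).1) hρR hr (ξ := a / (t + ε)) (by positivity)
    have r2 := h.relQ_nonpos hp (fun ξ => (hC ξ).1) hρL hl (ξ := -a / (t + ε))
      (div_nonpos_of_nonpos_of_nonneg (by linarith) hs.le)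
    simp only [relQ, relE] at r1 r2
    simp only [hb1, hb2, hb3, hb4, hG]
    linarith
  -- the relative energies are the energies corrected by the tested quantities
  have D : (∫ x in Dom a, relE2 p (ρ τ x) (u τ x) (R (x.1 / (τ + ε))) (U (x.1 / (τ + ε)))) -
      (∫ x in Dom a, relE p (riem ρL ρR x) (riem u1L u1R x) (R (x.1 / ε)) (U (x.1 / ε))) =
      ((∫ x in Dom a, (1 / 2 * ρ τ x * dot (u τ x) (u τ x) + Hfun p (ρ τ x))) -
        (∫ x in Dom a, (1 / 2 * riem ρL ρR x * (riem u1L u1R x) ^ 2 + Hfun p (riem ρL ρR x)))) -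
      (∫ x in Dom a, (ρ τ x * (u τ x).1 * U (x.1 / (τ + ε))
        - riem ρL ρR x * riem u1L u1R x * U (x.1 / ε))) +
      (∫ x in Dom a, (ρ τ x * G (x.1 / (τ + ε)) - riem ρL ρR x * G (x.1 / ε))) +
      (∫ x in Dom a, (1 * p (R (x.1 / (τ + ε))) - 1 * p (R (x.1 / ε)))) := by
    have int : ∀ {f : ℝ × ℝ → ℝ}, BM univ f → Integrable f (volume.restrict (Dom a)) := fun hf => by
      obtain ⟨B, hB⟩ := hf.bdd
      exact integrable_of_bdd hf.meas.aestronglyMeasurable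
        (Eventually.of_forall fun x => hB x (mem_univ x))
    have BU := BF hKU.continuous.measurable bU
    have BG := BF hKG.continuous.measurable bG
    have BP := BF hKP.continuous.measurable bP
    have j1 : Integrable (fun x => 1 / 2 * ρ τ x * dot (u τ x) (u τ x) + Hfun p (ρ τ x))
        (volume.restrict (Dom a)) := int
      ((((BM.const (1 / 2)).mul Bτρ).mul ((Bτu.mul Bτu).add (Bτu2.mul Bτu2))).add BτH)
    have j2 : Integrable (fun x => 1 / 2 * riem ρL ρR x * (riem u1L u1R x) ^ 2
        + Hfun p (riem ρL ρR x)) (volume.restrict (Dom a)) :=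
      int ((((BM.const (1 / 2)).mul B0ρ).mul B0u.sq).add B0H)
    have j3 := int (((Bτρ.mul Bτu).mul (BU (τ + ε))).sub ((B0ρ.mul B0u).mul (BU ε)))
    have j4 := int ((Bτρ.mul (BG (τ + ε))).sub (B0ρ.mul (BG ε)))
    have j5 := int (((BM.const 1).mul (BP (τ + ε))).sub ((BM.const 1).mul (BP ε)))
    have f1 : ∀ x, relE2 p (ρ τ x) (u τ x) (R (x.1 / (τ + ε))) (U (x.1 / (τ + ε))) =
        (1 / 2 * ρ τ x * dot (u τ x) (u τ x) + Hfun p (ρ τ x))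
          - ρ τ x * (u τ x).1 * U (x.1 / (τ + ε)) + ρ τ x * G (x.1 / (τ + ε))
          + p (R (x.1 / (τ + ε))) := fun x => by
      simp only [relE2, relE, dot, hG]; ring
    have f2 : ∀ x : ℝ × ℝ, relE p (riem ρL ρR x) (riem u1L u1R x) (R (x.1 / ε)) (U (x.1 / ε)) =
        (1 / 2 * riem ρL ρR x * (riem u1L u1R x) ^ 2 + Hfun p (riem ρL ρR x))
          - riem ρL ρR x * riem u1L u1R x * U (x.1 / ε) + riem ρL ρR x * G (x.1 / ε)
          + p (R (x.1 / ε)) := fun x => by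
      simp only [relE, hG]; ring
    have g1 := ((j1.sub (int ((Bτρ.mul Bτu).mul (BU (τ + ε))))).add
      (int (Bτρ.mul (BG (τ + ε))))).add (int (BP (τ + ε)))
    have g2 := ((j2.sub (int ((B0ρ.mul B0u).mul (BU ε)))).add
      (int (B0ρ.mul (BG ε)))).add (int (BP ε))
    rw [← integral_sub' j1 j2, ← integral_sub' (j1.sub j2) j3,
      ← integral_add' ((j1.sub j2).sub j3) j4, ← integral_add' (((j1.sub j2).sub j3).add j4) j5]
    simp only [f1, f2]
    refine (integral_sub g1 g2).symm.trans ?_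
    congr 1
    ext x
    simp only [Pi.add_apply, Pi.sub_apply]
    ring
  have e0 : ∫ t in (0:ℝ)..τ, (0 * p (R (a / (t + ε))) - 0 * p (R (-a / (t + ε)))) = 0 := by simp
  have e4 : ∫ _t in (0:ℝ)..τ, ∫ _s in (0:ℝ)..1, b3 = ∫ _t in (0:ℝ)..τ, b3 := by simp
  rw [e4] at h3
  rw [e0] at i0
  linarith

/-! ### Passage to the limit and conclusion -/

lemma relE2_nonneg {p : ℝ → ℝ} (hp : PressureOK p) {r s v : ℝ} {w : ℝ × ℝ} (hr : 0 ≤ r)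
    (hs : 0 < s) : 0 ≤ relE2 p r w s v :=
  add_nonneg (by positivity) (relE_nonneg hp hr hs)

/-- The relative energy separates states, because the reference density is positive. -/
lemma eq_of_relE2_eq_zero {p : ℝ → ℝ} (hp : PressureOK p) {r s v : ℝ} {w : ℝ × ℝ} (hr : 0 ≤ r)
    (hs : 0 < s) (h : relE2 p r w s v = 0) : r = s ∧ w = (v, 0) := by
  have h1 : 0 ≤ 1 / 2 * r * w.2 ^ 2 := by positivity
  have h2 : 0 ≤ 1 / 2 * r * (w.1 - v) ^ 2 := by positivity
  have h3 := hp.rel_nonneg hr hs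
  rw [relE2, relE] at h
  have hrs : r = s := by
    by_contra hne
    linarith [hp.rel_pos hr hs hne]
  subst hrs
  have h4 : 1 / 2 * r * w.2 ^ 2 = 0 := by linarith
  have h5 : 1 / 2 * r * (w.1 - v) ^ 2 = 0 := by linarith
  have h6 : w.2 = 0 := by
    rcases mul_eq_zero.1 h4 with h | h
    · linarith
    · exact pow_eq_zero_iff two_ne_zero |>.1 h
  have h7 : w.1 - v = 0 := by
    rcases mul_eq_zero.1 h5 with h | h
    · linarith
    · exact pow_eq_zero_iff two_ne_zero |>.1 h
  exact ⟨rfl, Prod.ext (by simpa using sub_eq_zero.1 h7) h6⟩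

lemma relE2_self (p : ℝ → ℝ) {s : ℝ} (hs : 0 < s) (v : ℝ) : relE2 p s (v, 0) s v = 0 := by
  rw [relE2, relE, rel_self p hs]; simp

lemma relE2_eq_relE (p : ℝ → ℝ) (r w s v : ℝ) : relE2 p r (w, 0) s v = relE p r w s v := by
  simp [relE2]

/-- The bound is uniform in the state and in `ξ`; it provides the dominating constant in the limits
`ε → 0`. -/
lemma Profile.relE2_bdd {p R U : ℝ → ℝ} (hp : PressureOK p) (h : Profile p R U) {C : ℝ}
    (hC : ∀ ξ, R ξ ≤ C ∧ |U ξ| ≤ C) (C' : ℝ) :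
    ∃ B, ∀ r w ξ, 0 ≤ r → r ≤ C' → ‖w‖ ≤ C' → |relE2 p r w (R ξ) (U ξ)| ≤ B := by
  obtain ⟨c, hc, hcR⟩ := h.lower
  have hcont : ContinuousOn (Hder p) (Icc c C) := fun r hr =>
    (hp.hasDerivAt_Hder (hc.trans_le hr.1)).continuousAt.continuousWithinAt
  obtain ⟨B1, hB1⟩ := isCompact_Icc.exists_bound_of_continuousOn hcont
  obtain ⟨B2, hB2⟩ := hp.bdd_Hfun C'
  refine ⟨1 / 2 * C' * C' ^ 2 + (1 / 2 * C' * (C' + C) ^ 2 + (B2 + B1 * C' + p C)),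
    fun r w ξ hr hrC hw => ?_⟩
  have hw1 : |w.1| ≤ C' := (norm_fst_le w).trans hw
  have hw2 : |w.2| ≤ C' := (norm_snd_le w).trans hw
  have hC0 : 0 ≤ C' := hr.trans hrC
  have k1 : |Hder p (R ξ)| ≤ B1 := hB1 _ ⟨hcR ξ, (hC ξ).1⟩
  have k2 := hB2 r hr hrC
  have k3 := hp.bdd_p (h.pos ξ).le (hC ξ).1
  have k4 : |w.1 - U ξ| ≤ C' + C := (abs_sub _ _).trans (add_le_add hw1 (hC ξ).2)
  rw [relE2, relE]
  refine (abs_add_le _ _).trans (add_le_add ?_ ((abs_add_le _ _).trans (add_le_add ?_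
    ((abs_add_le _ _).trans (add_le_add ((abs_sub _ _).trans (add_le_add k2 ?_)) k3)))))
  · rw [abs_of_nonneg (by positivity), ← sq_abs w.2]
    gcongr
  · rw [abs_of_nonneg (by positivity), ← sq_abs (w.1 - U ξ)]
    gcongr
  · rw [abs_mul, abs_of_nonneg hr]
    exact mul_le_mul k1 hrC hr ((abs_nonneg _).trans k1)

lemma Profile.continuous_relE2 {p R U : ℝ → ℝ} (hp : PressureOK p) (h : Profile p R U) (r : ℝ)
    (w : ℝ × ℝ) : Continuous fun ξ => relE2 p r w (R ξ) (U ξ) := by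
  obtain ⟨KU, hKU⟩ := h.lipU
  obtain ⟨KR, hKR⟩ := h.lipR
  have c1 : Continuous fun ξ => p (R ξ) := continuous_iff_continuousAt.2 fun ξ =>
    (hp.hasDerivAt (h.pos ξ)).continuousAt.comp hKR.continuous.continuousAt
  have c2 : Continuous fun ξ => Hder p (R ξ) := continuous_iff_continuousAt.2 fun ξ =>
    (hp.hasDerivAt_Hder (h.pos ξ)).continuousAt.comp hKR.continuous.continuousAt
  have c3 := hKU.continuous
  unfold relE2 relE
  exact continuous_const.add ((continuous_const.mul ((continuous_const.sub c3).pow 2)).add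
    ((continuous_const.sub (c2.mul continuous_const)).add c1))

lemma Profile.measurable_relE2 {p R U : ℝ → ℝ} (hp : PressureOK p) (h : Profile p R U)
    {r : ℝ × ℝ → ℝ} (hr : Measurable r) (hr0 : ∀ x, 0 ≤ r x) {w : ℝ × ℝ → ℝ × ℝ}
    (hw : Measurable w) (s : ℝ) :
    Measurable fun x => relE2 p (r x) (w x) (R (x.1 / s)) (U (x.1 / s)) := by
  obtain ⟨KU, hKU⟩ := h.lipU
  obtain ⟨KR, hKR⟩ := h.lipR
  have c1 : Measurable fun ξ => p (R ξ) := (continuous_iff_continuousAt.2 fun ξ =>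
    (hp.hasDerivAt (h.pos ξ)).continuousAt.comp hKR.continuous.continuousAt).measurable
  have c2 : Measurable fun ξ => Hder p (R ξ) := (continuous_iff_continuousAt.2 fun ξ =>
    (hp.hasDerivAt_Hder (h.pos ξ)).continuousAt.comp hKR.continuous.continuousAt).measurable
  have c3 := hKU.continuous.measurable
  have m : Measurable fun x : ℝ × ℝ => x.1 / s := by fun_prop
  have m1 := c1.comp m
  have m2 := c2.comp m
  have m3 := c3.comp m
  have m4 := hp.measurable_Hfun hr hr0
  have m5 := hw.fst
  have m6 := hw.snd
  simp only [Function.comp_def] at m1 m2 m3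
  unfold relE2 relE
  exact (((measurable_const.mul hr).mul (m6.pow_const 2))).add
    (((measurable_const.mul hr).mul ((m5.sub m3).pow_const 2)).add ((m4.sub (m2.mul hr)).add m1))

/-- The Riemann data are attained by the fan, in the sense of relative energy. -/
lemma tendsto_relE_init {a : ℝ} {p : ℝ → ℝ} {ρL ρR u1L u1R : ℝ} {R U : ℝ → ℝ}
    (hp : PressureOK p) (hρL : 0 < ρL) (hρR : 0 < ρR) (h : Profile p R U) {M C : ℝ}
    (hr : ∀ ξ, M ≤ ξ → R ξ = ρR ∧ U ξ = u1R) (hl : ∀ ξ, ξ ≤ -M → R ξ = ρL ∧ U ξ = u1L)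
    (hC : ∀ ξ, R ξ ≤ C ∧ |U ξ| ≤ C) {e : ℕ → ℝ} (he : Tendsto e atTop (𝓝[>] 0)) :
    Tendsto (fun n => ∫ x in Dom a,
      relE p (riem ρL ρR x) (riem u1L u1R x) (R (x.1 / e n)) (U (x.1 / e n))) atTop (𝓝 0) := by
  set C' := max (max ρL ρR) (max |u1L| |u1R|)
  obtain ⟨B, hB⟩ := h.relE2_bdd hp hC C'
  have hne : ∀ᵐ x ∂(volume.restrict (Dom a)), x.1 ≠ 0 := by
    have := ae_fst_of_ae (P := fun ξ => ξ ≠ 0) (Measure.ae_ne volume 0) a one_ne_zero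
    simpa using this
  rw [← integral_zero (ℝ × ℝ) ℝ (μ := volume.restrict (Dom a))]
  simp only [← relE2_eq_relE]
  refine tendsto_integral_of_dominated_convergence (fun _ => B) (fun n => ?_)
    (integrable_const _) (fun n => Eventually.of_forall fun x => ?_) ?_
  · refine (h.measurable_relE2 hp (measurable_riem _ _) (fun x => ?_)
      ((measurable_riem _ _).prodMk measurable_const) _).aestronglyMeasurable
    exact riem_cases (P := fun r _ => 0 ≤ r) (u1L := u1L) (u1R := u1R) hρL.le hρR.le x
  · have := riem_cases (P := fun r v => 0 ≤ r ∧ r ≤ C' ∧ |v| ≤ C') (ρL := ρL) (ρR := ρR) (u1L := u1L)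
      (u1R := u1R) ⟨hρL.le, by simp [C'], by simp [C']⟩ ⟨hρR.le, by simp [C'], by simp [C']⟩ x
    refine hB _ _ _ this.1 this.2.1 ?_
    rw [Prod.norm_def, norm_zero]
    exact max_le this.2.2 (this.1.trans this.2.1)
  · filter_upwards [hne] with x hx
    have hpos : ∀ᶠ n in atTop, 0 < e n := he.eventually self_mem_nhdsWithin
    have he0 : Tendsto e atTop (𝓝 0) := tendsto_nhds_of_tendsto_nhdsWithin he
    have hsm : ∀ᶠ n in atTop, (|M| + 1) * e n < |x.1| := by
      have := he0.const_mul (|M| + 1)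
      rw [mul_zero] at this
      exact this.eventually_lt_const (abs_pos.2 hx)
    refine tendsto_const_nhds.congr' ?_
    filter_upwards [hpos, hsm] with n hn hs
    have hM : (|M| + 1) * e n ≥ M * e n :=
      mul_le_mul_of_nonneg_right (by linarith [le_abs_self M]) hn.le
    rcases lt_or_gt_of_ne hx with h0 | h0
    · rw [abs_of_neg h0] at hs
      obtain ⟨e1, e2⟩ := hl (x.1 / e n) (by rw [div_le_iff₀ hn]; linarith)
      rw [e1, e2, riem, riem, if_pos h0.le, if_pos h0.le, relE2_self p hρL]
    · rw [abs_of_pos h0] at hs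
      obtain ⟨e1, e2⟩ := hr (x.1 / e n) (by rw [le_div_iff₀ hn]; linarith)
      rw [e1, e2, riem, riem, if_neg (not_le.2 h0), if_neg (not_le.2 h0), relE2_self p hρR]

/-- Uniqueness of the rarefaction wave (Theorem 2.1): under the pressure assumptions, any
bounded admissible weak solution `(ρ,u)` of the Riemann problem on `(0,T) × Ω` with `ρ ≥ 0`
a.e. coincides a.e. with the rarefaction-wave solution `(ρ̃,ũ)`, extended as constant in the
`x₂` variable. -/
theorem rarefaction_wave_uniqueness
    (T a : ℝ) (hT : 0 < T) (ha : 0 < a)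
    (p : ℝ → ℝ) (hp : PressureOK p)
    (ρL ρR u1L u1R : ℝ) (hρL : 0 < ρL) (hρR : 0 < ρR)
    (R U : ℝ → ℝ) (hwave : IsRarefactionWave T p ρL ρR u1L u1R R U)
    (ρ : ℝ → ℝ × ℝ → ℝ) (u : ℝ → ℝ × ℝ → ℝ × ℝ)
    (hsol : IsAdmissibleWeakSol T a p ρL ρR u1L u1R ρ u) :
    ∀ᵐ z ∂(volume.restrict (Ioo 0 T ×ˢ Dom a) : Measure (ℝ × (ℝ × ℝ))),
      ρ z.1 z.2 = R (z.2.1 / z.1) ∧ u z.1 z.2 = (U (z.2.1 / z.1), 0) := by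
  have h := wave_profile hT hp hwave
  obtain ⟨M, C, hr, hl, hC⟩ := wave_ends hT hp hwave
  obtain ⟨KU, hKU⟩ := h.lipU
  obtain ⟨KR, hKR⟩ := h.lipR
  have hs := hsol.posPart
  set r : ℝ → ℝ × ℝ → ℝ := fun t x => max (ρ t x) 0 with hr_def
  have hr0 : ∀ t x, 0 ≤ r t x := fun t x => le_max_right _ _
  obtain ⟨C', hb⟩ := hs.bdd
  have hle : ∀ t x, r t x ≤ C' := fun t x => (le_abs_self _).trans (hb t x).1
  obtain ⟨B, hB⟩ := h.relE2_bdd hp hC C'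
  have slice : ∀ᵐ τ ∂(volume.restrict (Ioo 0 T)), ∀ᵐ x ∂(volume.restrict (Dom a)),
      r τ x = R (x.1 / τ) ∧ u τ x = (U (x.1 / τ), 0) := by
    filter_upwards [hs.w1, hs.w2, hs.w3, ae_restrict_mem measurableSet_Ioo] with τ h1 h2 h3 hτ
    have mr : Measurable (r τ) := hs.meas_ρ.comp measurable_prodMk_left
    have mu : Measurable (u τ) := hs.meas_u.comp measurable_prodMk_left
    -- the fan is shifted by `e n → 0`, and the shift is removed in the limit
    set e : ℕ → ℝ := fun n => 1 / ((n : ℝ) + 1) with he_def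
    have hpos : ∀ n, 0 < e n := fun n => Nat.one_div_pos_of_nat
    have he0 : Tendsto e atTop (𝓝 0) := tendsto_one_div_add_atTop_nhds_zero_nat
    have he : Tendsto e atTop (𝓝[>] 0) :=
      tendsto_nhdsWithin_iff.2 ⟨he0, Eventually.of_forall hpos⟩
    have step : ∀ n, _ := fun n => relE_step ha hp hρL hρR h hr hl hC hr0 hs.meas_ρ hs.meas_u hb
      hτ.1 (hpos n) (w1_selfsim hτ.1 (hpos n) h1) (w2_selfsim hτ.1 (hpos n) h2) h3
    have lim := tendsto_relE_init (a := a) hp hρL hρR h hr hl hC he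
    have lim' : Tendsto (fun n => ∫ x in Dom a,
        relE2 p (r τ x) (u τ x) (R (x.1 / (τ + e n))) (U (x.1 / (τ + e n)))) atTop
        (𝓝 (∫ x in Dom a, relE2 p (r τ x) (u τ x) (R (x.1 / τ)) (U (x.1 / τ)))) := by
      refine tendsto_integral_of_dominated_convergence (fun _ => B)
        (fun n => (h.measurable_relE2 hp mr (hr0 τ) mu _).aestronglyMeasurable)
        (integrable_const _) (fun n => Eventually.of_forall fun x =>
          hB _ _ _ (hr0 τ x) (hle τ x) (hb τ x).2) (Eventually.of_forall fun x => ?_)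
      refine ((h.continuous_relE2 hp _ _).tendsto (x.1 / τ)).comp ?_
      refine tendsto_const_nhds.div ?_ hτ.1.ne'
      simpa using he0.const_add τ
    have hle0 := le_of_tendsto_of_tendsto' lim' lim step
    have nn : ∀ x, 0 ≤ relE2 p (r τ x) (u τ x) (R (x.1 / τ)) (U (x.1 / τ)) := fun x =>
      relE2_nonneg hp (hr0 τ x) (h.pos _)
    have hz := (integral_eq_zero_iff_of_nonneg nn (integrable_of_bdd
      (h.measurable_relE2 hp mr (hr0 τ) mu _).aestronglyMeasurable (Eventually.of_forall fun x =>
        hB _ _ _ (hr0 τ x) (hle τ x) (hb τ x).2))).1 (le_antisymm hle0 (integral_nonneg nn))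
    filter_upwards [hz] with x hx
    exact eq_of_relE2_eq_zero hp (hr0 τ x) (h.pos _) hx
  have mset : MeasurableSet {z : ℝ × (ℝ × ℝ) |
      r z.1 z.2 = R (z.2.1 / z.1) ∧ u z.1 z.2 = (U (z.2.1 / z.1), 0)} := by
    have m : Measurable fun z : ℝ × (ℝ × ℝ) => z.2.1 / z.1 := by fun_prop
    exact (measurableSet_eq_fun hs.meas_ρ (hKR.continuous.measurable.comp m)).inter
      (measurableSet_eq_fun hs.meas_u
        ((hKU.continuous.measurable.comp m).prodMk measurable_const))
  have prod : ∀ᵐ z ∂(volume.restrict (Ioo 0 T ×ˢ Dom a) : Measure (ℝ × (ℝ × ℝ))),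
      r z.1 z.2 = R (z.2.1 / z.1) ∧ u z.1 z.2 = (U (z.2.1 / z.1), 0) := by
    rw [Measure.volume_eq_prod, ← Measure.prod_restrict]
    exact (Measure.ae_prod_iff_ae_ae mset).2 slice
  filter_upwards [prod, hsol.nonneg] with z hz hn
  have e : r z.1 z.2 = ρ z.1 z.2 := max_eq_left hn
  rwa [e] at hz
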